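/- arXiv:0911.3810 — 2 statements merged into one kernel-verified Lean document; each statement's English description precedes it below -/
import Mathlib

section
/- Let F be the bowtie graph (two triangles joined by an edge: vertex set {1,...,6}, edges {1,2},{1,3},{2,3},{4,5},{4,6},{5,6},{1,4}). There exists a sequence of online Painter strategies with 2 colors (one for each board size n) such that for every function N : ℕ → ℕ with N(n) = o(n^{60/43}), the probability that the board G_{N(n)} of the online F-avoidance game with 2 colors on n vertices contains a monochromatic copy of F tends to 0 as n → ∞. -/
open SimpleGraph Filter Asymptotics
open scoped Classical

/-- A history of the game: the sequence of edges presented so far, together with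
the colors (elements of `Fin r`, representing the colors `1,…,r`) they received. -/
abbrev EdgeHistory (V : Type) (r : ℕ) := List (Sym2 V × Fin r)

/-- A Painter strategy on vertex type `V` with `r` colors: a function assigning a color
to every pair (history, new edge). -/
abbrev PainterStrategy (V : Type) (r : ℕ) := EdgeHistory V r → Sym2 V → Fin r

/-- Auxiliary function: run a Painter strategy on a list of presented edges,
extending the given history. -/
def runPainterAux {V : Type} {r : ℕ} (π : PainterStrategy V r) :
    EdgeHistory V r → List (Sym2 V) → EdgeHistory V r
  | h, [] => h
  | h, e :: es => runPainterAux π (h ++ [(e, π h e)]) es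

/-- The colored history obtained by coloring the edges of `l` successively
according to the Painter strategy `π`. -/
def runPainter {V : Type} {r : ℕ} (π : PainterStrategy V r) (l : List (Sym2 V)) :
    EdgeHistory V r :=
  runPainterAux π [] l

/-- `G` contains a copy of `F`, i.e. a subgraph isomorphic to `F`. -/
def IsCopy {α β : Type} (F : SimpleGraph α) (G : SimpleGraph β) : Prop :=
  ∃ f : α ↪ β, ∀ u v : α, F.Adj u v → G.Adj (f u) (f v)

/-- The graph formed by the edges of color `c` in the history `h`. -/
def colorGraph {V : Type} {r : ℕ} (h : EdgeHistory V r) (c : Fin r) : SimpleGraph V :=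
  SimpleGraph.fromEdgeSet {e | (e, c) ∈ h}

/-- The history `h` contains a monochromatic copy of `F`. -/
def HasMonoCopy {α V : Type} {r : ℕ} (F : SimpleGraph α) (h : EdgeHistory V r) : Prop :=
  ∃ c : Fin r, IsCopy F (colorGraph h c)

/-- The number of edges of `G` lying entirely within the vertex set `S`. -/
noncomputable def edgesWithin {V : Type} (G : SimpleGraph V) (S : Set V) : ℕ :=
  (G.edgeSet ∩ {e | ∀ v ∈ e, v ∈ S}).ncard

/-- `m(G) ≤ d`: every subgraph `H` of `G` with at least one vertex satisfies `e_H ≤ d · v_H`. -/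
def DensityLE {V : Type} (G : SimpleGraph V) (d : ℝ) : Prop :=
  ∀ S : Finset V, S.Nonempty → (edgesWithin G (↑S : Set V) : ℝ) ≤ d * (S.card : ℝ)

/-- `G` contains no cycle and every connected component of `G` has at most `k` edges
(equivalently, `G` is acyclic and contains no connected subgraph with more than `k` edges). -/
def TreeSizeLE {V : Type} (G : SimpleGraph V) (k : ℕ) : Prop :=
  G.IsAcyclic ∧ ∀ S : Set V, (G.induce S).Connected → edgesWithin G S ≤ k

/-- A legal sequence of moves for Builder: distinct non-loop edges. -/
def ValidEdgeSeq {V : Type} (l : List (Sym2 V)) : Prop :=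
  l.Nodup ∧ ∀ e ∈ l, ¬ e.IsDiag

/-- The (uncolored) board formed by a list of edges. -/
def boardOf {V : Type} (l : List (Sym2 V)) : SimpleGraph V :=
  SimpleGraph.fromEdgeSet {e | e ∈ l}

/-- Builder has a winning strategy in the deterministic `F`-avoidance game with `r` colors
and density restriction `d`. -/
def BuilderWinsDensity {α : Type} (F : SimpleGraph α) (r : ℕ) (d : ℝ) : Prop :=
  ∃ a : ℕ, ∀ π : PainterStrategy (Fin a) r, ∃ l : List (Sym2 (Fin a)),
    ValidEdgeSeq l ∧ (∀ i : ℕ, DensityLE (boardOf (l.take i)) d) ∧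
    HasMonoCopy F (runPainter π l)

/-- Builder has a winning strategy in the deterministic `F`-avoidance game with `r` colors
and tree size restriction `k`. -/
def BuilderWinsTree {α : Type} (F : SimpleGraph α) (r k : ℕ) : Prop :=
  ∃ a : ℕ, ∀ π : PainterStrategy (Fin a) r, ∃ l : List (Sym2 (Fin a)),
    ValidEdgeSeq l ∧ (∀ i : ℕ, TreeSizeLE (boardOf (l.take i)) k) ∧
    HasMonoCopy F (runPainter π l)

/-- The Painter strategy `π` on `a` vertices never creates a monochromatic copy of `F`
against any Builder play obeying the tree size restriction `k`. -/
def PainterAvoidsTree {α : Type} (F : SimpleGraph α) (r k a : ℕ)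
    (π : PainterStrategy (Fin a) r) : Prop :=
  ∀ l : List (Sym2 (Fin a)), ValidEdgeSeq l →
    (∀ i : ℕ, TreeSizeLE (boardOf (l.take i)) k) →
    ¬ HasMonoCopy F (runPainter π l)

/-- Painter has a winning strategy in the deterministic `F`-avoidance game with `r` colors
and tree size restriction `k`. -/
def PainterWinsTree {α : Type} (F : SimpleGraph α) (r k : ℕ) : Prop :=
  ∀ a : ℕ, ∃ π : PainterStrategy (Fin a) r, PainterAvoidsTree F r k a π

/-- A sequence of `N` distinct non-loop edges on `n` vertices. -/
def ValidSeqFun {n N : ℕ} (f : Fin N → Sym2 (Fin n)) : Prop :=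
  Function.Injective f ∧ ∀ i, ¬ (f i).IsDiag

/-- The probability (with respect to the uniformly random order in which the `N` distinct
edges of the random process on `n` vertices appear) of the event `P`. -/
noncomputable def onlineProb (n N : ℕ) (P : (Fin N → Sym2 (Fin n)) → Prop) : ℝ :=
  (Set.ncard {f : Fin N → Sym2 (Fin n) | ValidSeqFun f ∧ P f} : ℝ) /
  (Set.ncard {f : Fin N → Sym2 (Fin n) | ValidSeqFun f} : ℝ)

/-- Event: playing the online strategy `π` on the random edge sequence `f` produces
a monochromatic copy of `F`. -/
def OnlineMonoCopy {α : Type} (F : SimpleGraph α) {r n N : ℕ}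
    (π : PainterStrategy (Fin n) r) (f : Fin N → Sym2 (Fin n)) : Prop :=
  HasMonoCopy F (runPainter π (List.ofFn f))

/-- The bowtie graph: two triangles `{0,1,2}` and `{3,4,5}` joined by the edge `{0,3}`
(vertices `1,…,6` of the informal statement correspond to `0,…,5` here). -/
def bowtie : SimpleGraph (Fin 6) :=
  SimpleGraph.fromEdgeSet
    {s(0, 1), s(0, 2), s(1, 2), s(3, 4), s(3, 5), s(4, 5), s(0, 3)}


namespace BT

def bE : Fin 7 → Fin 6 × Fin 6 := ![(0,1),(0,2),(1,2),(3,4),(3,5),(4,5),(0,3)]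

def bAdj (i j : Fin 6) : Prop := ∃ h : Fin 7, bE h = (i, j) ∨ bE h = (j, i)

instance (i j : Fin 6) : Decidable (bAdj i j) := by unfold bAdj; infer_instance

def bow (M : Finset (Fin 6)) : ℕ :=
  (Finset.univ.filter (fun h : Fin 7 => (bE h).1 ∈ M ∧ (bE h).2 ∈ M)).card

def tch (m : Finset (Fin 6)) : Finset (Fin 7) :=
  Finset.univ.filter (fun h : Fin 7 => ¬ ((bE h).1 ∈ m ∧ (bE h).2 ∈ m))

set_option maxRecDepth 100000 in
lemma I1 : ∀ N : Finset (Fin 6), 1 ≤ bow N →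
    43 + 9 * bow N ≤ 26 * N.card ∧ (N.card ≠ 2 → 43 + 9 * bow N + 8 ≤ 26 * N.card) := by
  decide +kernel

lemma I2 : ∀ M : Finset (Fin 6), M.Nonempty →
    9 * (bow M + 1) + 3 ≤ 13 * M.card ∧ 9 * bow M + 26 ≤ 26 * M.card := by
  decide +kernel

lemma I3 : ∀ m : Finset (Fin 6), 43 * (6 - (m.card : ℤ)) - 35 * ((tch m).card : ℤ) ≤ -13 ∨ m = ∅ ∨
    m = Finset.univ ∨ m = {0,1,2} ∨ m = {3,4,5} := by
  decide +kernel

lemma I4 : ∀ m : Finset (Fin 6), ∑ k : Fin 6,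
   (Finset.univ.filter (fun l : Fin 6 => bAdj k l ∧ ¬ (k ∈ m ∧ l ∈ m))).card = 2 * (tch m).card := by
  decide +kernel

lemma bE_ne (h : Fin 7) : (bE h).1 ≠ (bE h).2 := by revert h; decide


section ext
variable {V : Type}

def Sy (A : V → V → Prop) : Prop := ∀ ⦃x y⦄, A x y → A y x

noncomputable def av (A : V → V → Prop) (x y : V) : ℤ := if A x y then 1 else 0

noncomputable def II (A : V → V → Prop) (S T : Finset V) : ℤ := ∑ x ∈ S, ∑ y ∈ T, av A x y

noncomputable def Lam (A : V → V → Prop) (S : Finset V) : ℤ := 43 * (S.card : ℤ) - 13 * II A S S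

lemma av_nonneg (A : V → V → Prop) (x y : V) : 0 ≤ av A x y := by
  unfold av; split_ifs <;> norm_num

lemma II_nonneg (A : V → V → Prop) (S T : Finset V) : 0 ≤ II A S T :=
  Finset.sum_nonneg fun _ _ => Finset.sum_nonneg fun _ _ => av_nonneg _ _ _

lemma II_pos {A : V → V → Prop} {S T : Finset V} {x y : V} (hx : x ∈ S) (hy : y ∈ T)
    (h : A x y) : 1 ≤ II A S T := by
  have h1 : ∑ y ∈ T, av A x y ≤ II A S T :=
    Finset.single_le_sum (f := fun x => ∑ y ∈ T, av A x y)
      (fun _ _ => Finset.sum_nonneg fun _ _ => av_nonneg _ _ _) hx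
  have h2 : av A x y ≤ ∑ y ∈ T, av A x y :=
    Finset.single_le_sum (f := fun y => av A x y) (fun _ _ => av_nonneg _ _ _) hy
  have h3 : av A x y = 1 := by simp [av, h]
  linarith

lemma II_union_left {A : V → V → Prop} {S S' T : Finset V} (h : Disjoint S S') :
    II A (S ∪ S') T = II A S T + II A S' T := by
  unfold II; rw [Finset.sum_union h]

lemma II_union_right {A : V → V → Prop} {S T T' : Finset V} (h : Disjoint T T') :
    II A S (T ∪ T') = II A S T + II A S T' := by
  unfold II; simp_rw [Finset.sum_union h]; rw [Finset.sum_add_distrib]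

lemma II_comm {A : V → V → Prop} (hA : Sy A) (S T : Finset V) : II A S T = II A T S := by
  unfold II; rw [Finset.sum_comm]
  refine Finset.sum_congr rfl fun x _ => Finset.sum_congr rfl fun y _ => ?_
  have : A x y ↔ A y x := ⟨fun h => hA h, fun h => hA h⟩
  unfold av; simp [this]

lemma sum_av {A : V → V → Prop} {ι : Type} (s : Finset ι) (x : V) (g : ι → V) :
    ∑ i ∈ s, av A x (g i) = ((s.filter (fun i => A x (g i))).card : ℤ) := by
  unfold av; simp

structure Conf (A : V → V → Prop) (τ : Fin 6 → V) (ζ : Fin 7 → V) : Prop where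
  inj : Function.Injective τ
  adjT : ∀ h, A (τ (bE h).1) (τ (bE h).2)
  adj1 : ∀ h, A (ζ h) (τ (bE h).1)
  adj2 : ∀ h, A (ζ h) (τ (bE h).2)
  nb : ∀ h k, ζ h = τ k → ¬ bAdj k (bE h).1 ∧ ¬ bAdj k (bE h).2

noncomputable def mk (P : Finset V) (τ : Fin 6 → V) : Finset (Fin 6) :=
  Finset.univ.filter (fun i => τ i ∈ P)

noncomputable def TT (τ : Fin 6 → V) : Finset V := Finset.univ.image τ

noncomputable def ZZ (P : Finset V) (τ : Fin 6 → V) (ζ : Fin 7 → V) : Finset V :=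
  ((tch (mk P τ)).image ζ) \ (P ∪ TT τ)

noncomputable def S2 (P : Finset V) (τ : Fin 6 → V) (ζ : Fin 7 → V) : Finset V :=
  ((P \ TT τ) ∪ TT τ) ∪ ZZ P τ ζ

noncomputable def jj (P : Finset V) (τ : Fin 6 → V) (ζ : Fin 7 → V) (w : V) : ℤ :=
  (((tch (mk P τ)).filter (fun h => ζ h = w)).card : ℤ)

noncomputable def MT (A : V → V → Prop) (P : Finset V) (τ : Fin 6 → V) (k : Fin 6) :
    Finset (Fin 6) :=
  Finset.univ.filter (fun l => A (τ k) (τ l) ∧ ¬ bAdj k l ∧ ¬ (τ k ∈ P ∧ τ l ∈ P))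

noncomputable def MP (A : V → V → Prop) (P : Finset V) (τ : Fin 6 → V) (p : V) :
    Finset (Fin 6) :=
  Finset.univ.filter (fun i => A p (τ i) ∧ τ i ∉ P)

noncomputable def NZ (A : V → V → Prop) (τ : Fin 6 → V) (z : V) : Finset (Fin 6) :=
  Finset.univ.filter (fun i => A z (τ i))

lemma mem_TT {τ : Fin 6 → V} {x : V} : x ∈ TT τ ↔ ∃ i, τ i = x := by simp [TT]

lemma tau_mem_TT (τ : Fin 6 → V) (i : Fin 6) : τ i ∈ TT τ := mem_TT.2 ⟨i, rfl⟩

lemma mem_mk {P : Finset V} {τ : Fin 6 → V} {i : Fin 6} : i ∈ mk P τ ↔ τ i ∈ P := by simp [mk]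

lemma bAdj_bE (h : Fin 7) : bAdj (bE h).1 (bE h).2 := ⟨h, Or.inl rfl⟩

lemma bAdj_symm {i j : Fin 6} (h : bAdj i j) : bAdj j i := by
  obtain ⟨h, h' | h'⟩ := h
  · exact ⟨h, Or.inr h'⟩
  · exact ⟨h, Or.inl h'⟩

lemma Conf.bAdj_adj {A : V → V → Prop} (hA : Sy A) {τ : Fin 6 → V} {ζ : Fin 7 → V}
    (hc : Conf A τ ζ) {i j : Fin 6} (h : bAdj i j) : A (τ i) (τ j) := by
  obtain ⟨h, h' | h'⟩ := h
  · have := hc.adjT h; rwa [h'] at this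
  · have := hc.adjT h; rw [h'] at this; exact hA this

lemma key_identity {A : V → V → Prop} (hA : Sy A) (P : Finset V) {τ : Fin 6 → V}
    {ζ : Fin 7 → V} (hc : Conf A τ ζ) :
    Lam A (S2 P τ ζ) = Lam A P + 43 * (6 - ((mk P τ).card : ℤ)) - 35 * ((tch (mk P τ)).card : ℤ)
      - ∑ k : Fin 6, (13 * ((MT A P τ k).card : ℤ) - 9 * jj P τ ζ (τ k))
      - ∑ p ∈ P \ TT τ, (26 * ((MP A P τ p).card : ℤ) - 9 * jj P τ ζ p)
      - ∑ z ∈ ZZ P τ ζ, (26 * ((NZ A τ z).card : ℤ) + 26 * II A {z} (P \ TT τ) - 43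
          - 9 * jj P τ ζ z)
      - 13 * II A (ZZ P τ ζ) (ZZ P τ ζ) := by
  have d1 : Disjoint (P \ TT τ) (TT τ) := Finset.sdiff_disjoint
  have d2 : Disjoint ((P \ TT τ) ∪ TT τ) (ZZ P τ ζ) := by
    rw [Finset.sdiff_union_self_eq_union]
    exact Finset.disjoint_sdiff
  have d2a : Disjoint (P \ TT τ) (ZZ P τ ζ) := d2.mono_left Finset.subset_union_left
  have d2b : Disjoint (TT τ) (ZZ P τ ζ) := d2.mono_left Finset.subset_union_right
  set X := (mk P τ).image τ with hX
  have d3 : Disjoint (P \ TT τ) X := by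
    refine d1.mono_right ?_
    intro x; simp only [hX, Finset.mem_image]; rintro ⟨i, _, rfl⟩; exact tau_mem_TT _ _
  have hP : P = (P \ TT τ) ∪ X := by
    ext x
    simp only [hX, Finset.mem_union, Finset.mem_sdiff, Finset.mem_image, mem_TT, mem_mk]
    constructor
    · intro hx
      by_cases h : ∃ i, τ i = x
      · obtain ⟨i, rfl⟩ := h; exact Or.inr ⟨i, hx, rfl⟩
      · exact Or.inl ⟨hx, h⟩
    · rintro (h | ⟨i, hi, rfl⟩)
      · exact h.1
      · exact hi
  have cT : (TT τ).card = 6 := by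
    unfold TT; rw [Finset.card_image_of_injective _ hc.inj]; simp
  have cX : X.card = (mk P τ).card := Finset.card_image_of_injective _ hc.inj
  have cS : ((S2 P τ ζ).card : ℤ) = (P \ TT τ).card + 6 + (ZZ P τ ζ).card := by
    unfold S2; rw [Finset.card_union_of_disjoint d2, Finset.card_union_of_disjoint d1, cT]
    push_cast; ring
  have cP : (P.card : ℤ) = (P \ TT τ).card + (mk P τ).card := by
    conv_lhs => rw [hP]
    rw [Finset.card_union_of_disjoint d3, cX]; push_cast; ring
  have iS : II A (S2 P τ ζ) (S2 P τ ζ) = II A (P \ TT τ) (P \ TT τ) + II A (TT τ) (TT τ)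
      + II A (ZZ P τ ζ) (ZZ P τ ζ) + 2 * II A (P \ TT τ) (TT τ) + 2 * II A (ZZ P τ ζ) (P \ TT τ)
      + 2 * II A (ZZ P τ ζ) (TT τ) := by
    unfold S2
    rw [II_union_left d2, II_union_right d2, II_union_right d2, II_union_left d1, II_union_right d1,
      II_union_right d1, II_union_left d1, II_union_right d1,
      II_comm hA (TT τ) (P \ TT τ), II_comm hA (P \ TT τ) (ZZ P τ ζ),
      II_comm hA (TT τ) (ZZ P τ ζ)]
    ring
  have iP : II A P P = II A (P \ TT τ) (P \ TT τ) + II A X X + 2 * II A (P \ TT τ) X := by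
    conv_lhs => rw [hP]
    rw [II_union_left d3, II_union_right d3, II_union_right d3, II_comm hA X (P \ TT τ)]
    ring
  have iPT : II A (P \ TT τ) (TT τ) - II A (P \ TT τ) X
      = ∑ p ∈ P \ TT τ, ((MP A P τ p).card : ℤ) := by
    unfold II
    rw [← Finset.sum_sub_distrib]
    refine Finset.sum_congr rfl fun p _ => ?_
    rw [hX, TT, Finset.sum_image (fun _ _ _ _ h => hc.inj h),
      Finset.sum_image (fun _ _ _ _ h => hc.inj h), mk,
      ← Finset.sum_filter_add_sum_filter_not Finset.univ (fun i => τ i ∈ P),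
      add_sub_cancel_left, sum_av, Finset.filter_filter]
    unfold MP
    simp only [and_comm]
  have iZT : II A (ZZ P τ ζ) (TT τ) = ∑ z ∈ ZZ P τ ζ, ((NZ A τ z).card : ℤ) := by
    unfold II
    refine Finset.sum_congr rfl fun p _ => ?_
    rw [TT, Finset.sum_image (fun _ _ _ _ h => hc.inj h), sum_av]; rfl
  have iZP : II A (ZZ P τ ζ) (P \ TT τ) = ∑ z ∈ ZZ P τ ζ, II A {z} (P \ TT τ) := by
    unfold II; simp
  have iTT : II A (TT τ) (TT τ) - II A X X
      = ∑ k, ((MT A P τ k).card : ℤ) + 2 * ((tch (mk P τ)).card : ℤ) := by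
    have h4 := I4 (mk P τ)
    have h4' : (2 * ((tch (mk P τ)).card : ℤ)) = ∑ k : Fin 6,
      ((Finset.univ.filter (fun l : Fin 6 => bAdj k l ∧ ¬ (k ∈ mk P τ ∧ l ∈ mk P τ))).card : ℤ) := by
      exact_mod_cast h4.symm
    rw [h4', ← Finset.sum_add_distrib]
    unfold II
    rw [hX, TT, Finset.sum_image (fun _ _ _ _ h => hc.inj h),
      Finset.sum_image (fun _ _ _ _ h => hc.inj h)]
    simp_rw [Finset.sum_image (fun _ _ _ _ h => hc.inj h)]
    have : ∑ x ∈ mk P τ, ∑ y ∈ mk P τ, av A (τ x) (τ y)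
        = ∑ x, if x ∈ mk P τ then ∑ y ∈ mk P τ, av A (τ x) (τ y) else 0 := by
      rw [Finset.sum_ite_mem]; simp
    rw [this, ← Finset.sum_sub_distrib]
    refine Finset.sum_congr rfl fun k _ => ?_
    have e1 : (MT A P τ k).card + (Finset.univ.filter (fun l : Fin 6 => bAdj k l ∧
        ¬ (k ∈ mk P τ ∧ l ∈ mk P τ))).card =
        (Finset.univ.filter (fun l : Fin 6 => A (τ k) (τ l) ∧
          ¬ (k ∈ mk P τ ∧ l ∈ mk P τ))).card := by
      rw [← Finset.card_union_of_disjoint]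
      · congr 1
        ext l
        simp only [MT, Finset.mem_union, Finset.mem_filter, Finset.mem_univ, true_and, mem_mk]
        have := fun h => hc.bAdj_adj hA (i := k) (j := l) h
        tauto
      · rw [Finset.disjoint_left]
        intro l
        simp only [MT, Finset.mem_filter, Finset.mem_univ, true_and]
        tauto
    have e1' : ((MT A P τ k).card : ℤ) + ((Finset.univ.filter (fun l : Fin 6 => bAdj k l ∧
        ¬ (k ∈ mk P τ ∧ l ∈ mk P τ))).card : ℤ) =
        ((Finset.univ.filter (fun l : Fin 6 => A (τ k) (τ l) ∧
          ¬ (k ∈ mk P τ ∧ l ∈ mk P τ))).card : ℤ) := by exact_mod_cast e1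
    rw [e1']
    by_cases hk : k ∈ mk P τ
    · simp only [hk, if_true, true_and]
      rw [← Finset.sum_filter_add_sum_filter_not Finset.univ (fun i => i ∈ mk P τ)]
      rw [Finset.filter_mem_eq_inter, Finset.univ_inter, add_sub_cancel_left, sum_av,
        Finset.filter_filter]
      simp only [and_comm]
    · simp only [hk, if_false, false_and, not_false_eq_true, and_true, sub_zero]
      rw [sum_av]
  have jS : ((tch (mk P τ)).card : ℤ) = ∑ k, jj P τ ζ (τ k) + ∑ p ∈ P \ TT τ, jj P τ ζ p
      + ∑ z ∈ ZZ P τ ζ, jj P τ ζ z := by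
    have hm : ∀ h ∈ tch (mk P τ), ζ h ∈ S2 P τ ζ := by
      intro h hh
      unfold S2 ZZ
      rw [Finset.sdiff_union_self_eq_union, Finset.union_sdiff_self_eq_union]
      exact Finset.mem_union_right _ (Finset.mem_image_of_mem _ hh)
    have h1 := Finset.card_eq_sum_card_fiberwise hm
    have h2 : ((tch (mk P τ)).card : ℤ) = ∑ w ∈ S2 P τ ζ, jj P τ ζ w := by
      unfold jj; exact_mod_cast h1
    rw [h2]
    conv_lhs => unfold S2
    rw [Finset.sum_union d2, Finset.sum_union d1]
    have h3 : ∑ x ∈ TT τ, jj P τ ζ x = ∑ k, jj P τ ζ (τ k) := by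
      conv_lhs => unfold TT
      rw [Finset.sum_image (fun _ _ _ _ h => hc.inj h)]
    rw [h3]; ring
  unfold Lam
  simp only [Finset.sum_sub_distrib, Finset.sum_add_distrib, ← Finset.mul_sum, Finset.sum_const,
    nsmul_eq_mul]
  rw [cS, iS, cP, iP, ← iPT, ← iZT, ← iZP]
  linarith

/-- closure hypothesis -/
def Cl (P : Finset V) (τ : Fin 6 → V) (ζ : Fin 7 → V) (h0 : Fin 7) : Prop :=
  ∀ h, h ≠ h0 → ζ h ∈ P → (τ (bE h).1 ∈ P ↔ τ (bE h).2 ∈ P)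

lemma mem_tch {m : Finset (Fin 6)} {h : Fin 7} :
    h ∈ tch m ↔ ¬ ((bE h).1 ∈ m ∧ (bE h).2 ∈ m) := by simp [tch]

lemma jgen (P : Finset V) (τ : Fin 6 → V) (ζ : Fin 7 → V) (h0 : Fin 7) (w : V)
    (M : Finset (Fin 6))
    (H1 : ∀ h ∈ tch (mk P τ), ζ h = w → h ≠ h0 → (bE h).1 ∈ M ∧ (bE h).2 ∈ M)
    (H2 : ∀ h ∈ tch (mk P τ), ζ h = w → M.Nonempty) :
    9 * jj P τ ζ w ≤ 13 * (M.card : ℤ) ∧ (M.Nonempty → 9 * jj P τ ζ w + 3 ≤ 13 * (M.card : ℤ)) := by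
  by_cases hM : M.Nonempty
  · have h1 : ((tch (mk P τ)).filter (fun h => ζ h = w)).card ≤ bow M + 1 := by
      unfold bow
      refine le_trans (Finset.card_le_card ?_) (Finset.card_insert_le h0 _)
      intro h hh
      rw [Finset.mem_filter] at hh
      by_cases h' : h = h0
      · simp [h']
      · simp [H1 h hh.1 hh.2 h']
    have h2 := (I2 M hM).1
    have h3 : jj P τ ζ w ≤ (bow M : ℤ) + 1 := by unfold jj; exact_mod_cast h1
    have h4 : 9 * ((bow M : ℤ) + 1) + 3 ≤ 13 * (M.card : ℤ) := by exact_mod_cast h2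
    constructor
    · linarith
    · intro; linarith
  · have : jj P τ ζ w = 0 := by
      unfold jj
      rw [Nat.cast_eq_zero, Finset.card_eq_zero, Finset.filter_eq_empty_iff]
      intro h hh h'
      exact hM (H2 h hh h')
    rw [this]
    exact ⟨by positivity, fun h => absurd h hM⟩

lemma slT {A : V → V → Prop} {P : Finset V} {τ : Fin 6 → V} {ζ : Fin 7 → V} {h0 : Fin 7}
    (hc : Conf A τ ζ) (hcl : Cl P τ ζ h0) (k : Fin 6) :
    9 * jj P τ ζ (τ k) ≤ 13 * ((MT A P τ k).card : ℤ) ∧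
    ((MT A P τ k).Nonempty → 9 * jj P τ ζ (τ k) + 3 ≤ 13 * ((MT A P τ k).card : ℤ)) := by
  apply jgen P τ ζ h0
  · intro h hh hk h1
    rw [mem_tch, mem_mk, mem_mk] at hh
    have a1 := hc.adj1 h
    have a2 := hc.adj2 h
    have a3 := hc.nb h k hk
    have a4 := hcl h h1
    rw [hk] at a1 a2 a4
    simp only [MT, Finset.mem_filter, Finset.mem_univ, true_and]
    tauto
  · intro h hh hk
    rw [mem_tch, mem_mk, mem_mk] at hh
    have a1 := hc.adj1 h
    have a2 := hc.adj2 h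
    have a3 := hc.nb h k hk
    rw [hk] at a1 a2
    by_cases hb : τ (bE h).1 ∈ P
    · refine ⟨(bE h).2, ?_⟩
      simp only [MT, Finset.mem_filter, Finset.mem_univ, true_and]
      tauto
    · refine ⟨(bE h).1, ?_⟩
      simp only [MT, Finset.mem_filter, Finset.mem_univ, true_and]
      tauto

lemma slP {A : V → V → Prop} {P : Finset V} {τ : Fin 6 → V} {ζ : Fin 7 → V} {h0 : Fin 7}
    (hc : Conf A τ ζ) (hcl : Cl P τ ζ h0) (p : V) (hp : p ∈ P \ TT τ) :
    9 * jj P τ ζ p ≤ 13 * ((MP A P τ p).card : ℤ) ∧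
    ((MP A P τ p).Nonempty → 9 * jj P τ ζ p + 3 ≤ 13 * ((MP A P τ p).card : ℤ)) := by
  rw [Finset.mem_sdiff] at hp
  apply jgen P τ ζ h0
  · intro h hh hk h1
    rw [mem_tch, mem_mk, mem_mk] at hh
    have a1 := hc.adj1 h
    have a2 := hc.adj2 h
    have a4 := hcl h h1
    rw [hk] at a1 a2 a4
    simp only [MP, Finset.mem_filter, Finset.mem_univ, true_and]
    tauto
  · intro h hh hk
    rw [mem_tch, mem_mk, mem_mk] at hh
    have a1 := hc.adj1 h
    have a2 := hc.adj2 h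
    rw [hk] at a1 a2
    by_cases hb : τ (bE h).1 ∈ P
    · refine ⟨(bE h).2, ?_⟩
      simp only [MP, Finset.mem_filter, Finset.mem_univ, true_and]
      tauto
    · refine ⟨(bE h).1, ?_⟩
      simp only [MP, Finset.mem_filter, Finset.mem_univ, true_and]
      tauto

lemma slZ {A : V → V → Prop} {P : Finset V} {τ : Fin 6 → V} {ζ : Fin 7 → V}
    (hc : Conf A τ ζ) (z : V) (hz : z ∈ ZZ P τ ζ) :
    43 + 9 * jj P τ ζ z ≤ 26 * ((NZ A τ z).card : ℤ) ∧
    ((NZ A τ z).card ≠ 2 → 43 + 9 * jj P τ ζ z + 8 ≤ 26 * ((NZ A τ z).card : ℤ)) := by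
  have h1 : ((tch (mk P τ)).filter (fun h => ζ h = z)).card ≤ bow (NZ A τ z) := by
    unfold bow
    refine Finset.card_le_card ?_
    intro h hh
    rw [Finset.mem_filter] at hh
    have a1 := hc.adj1 h
    have a2 := hc.adj2 h
    rw [hh.2] at a1 a2
    simp [NZ, a1, a2]
  have h0 : 1 ≤ ((tch (mk P τ)).filter (fun h => ζ h = z)).card := by
    rw [Nat.one_le_iff_ne_zero, ← Nat.pos_iff_ne_zero, Finset.card_pos]
    unfold ZZ at hz
    rw [Finset.mem_sdiff, Finset.mem_image] at hz
    obtain ⟨⟨h, hh, h'⟩, _⟩ := hz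
    exact ⟨h, by simp [hh, h']⟩
  have h2 := I1 (NZ A τ z) (h0.trans h1)
  unfold jj
  constructor
  · have := h2.1
    have : 43 + 9 * ((tch (mk P τ)).filter (fun h => ζ h = z)).card ≤ 26 * (NZ A τ z).card := by omega
    exact_mod_cast this
  · intro h3
    have := h2.2 h3
    have : 43 + 9 * ((tch (mk P τ)).filter (fun h => ζ h = z)).card + 8
      ≤ 26 * (NZ A τ z).card := by omega
    exact_mod_cast this

lemma subset_S2_P (P : Finset V) (τ : Fin 6 → V) (ζ : Fin 7 → V) : P ⊆ S2 P τ ζ := by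
  unfold S2; rw [Finset.sdiff_union_self_eq_union, Finset.union_assoc]
  exact Finset.subset_union_left

lemma tau_mem_S2 (P : Finset V) (τ : Fin 6 → V) (ζ : Fin 7 → V) (i : Fin 6) : τ i ∈ S2 P τ ζ := by
  unfold S2
  exact Finset.mem_union_left _ (Finset.mem_union_right _ (tau_mem_TT _ _))

lemma zeta_mem_S2 {P : Finset V} {τ : Fin 6 → V} {ζ : Fin 7 → V} {h : Fin 7}
    (hh : h ∈ tch (mk P τ)) : ζ h ∈ S2 P τ ζ := by
  unfold S2 ZZ
  rw [Finset.sdiff_union_self_eq_union, Finset.union_sdiff_self_eq_union]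
  exact Finset.mem_union_right _ (Finset.mem_image_of_mem _ hh)

lemma card_S2 (P : Finset V) (τ : Fin 6 → V) (ζ : Fin 7 → V) :
    (S2 P τ ζ).card ≤ P.card + 13 := by
  unfold S2 ZZ
  refine (Finset.card_union_le _ _).trans ?_
  refine (Nat.add_le_add (Finset.card_union_le _ _) le_rfl).trans ?_
  have h1 : (P \ TT τ).card ≤ P.card := Finset.card_le_card Finset.sdiff_subset
  have h2 : (TT τ).card ≤ 6 := by unfold TT; exact Finset.card_image_le.trans (by simp)
  have h3 : (((tch (mk P τ)).image ζ) \ (P ∪ TT τ)).card ≤ 7 := by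
    refine (Finset.card_le_card Finset.sdiff_subset).trans ?_
    refine Finset.card_image_le.trans ?_
    exact (Finset.card_le_univ _).trans (by simp)
  omega

lemma ext_main {A : V → V → Prop} (hA : Sy A) {P : Finset V} {τ : Fin 6 → V}
    {ζ : Fin 7 → V} {h0 : Fin 7} (hc : Conf A τ ζ) (hcl : Cl P τ ζ h0) :
    ∃ σT : Fin 6 → ℤ, ∃ σP σZ : V → ℤ,
    Lam A (S2 P τ ζ) = Lam A P + 43 * (6 - ((mk P τ).card : ℤ)) - 35 * ((tch (mk P τ)).card : ℤ)
      - ∑ k : Fin 6, σT k - ∑ p ∈ P \ TT τ, σP p - ∑ z ∈ ZZ P τ ζ, σZ z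
      - 13 * II A (ZZ P τ ζ) (ZZ P τ ζ) ∧
    (∀ k, 0 ≤ σT k) ∧ (∀ p ∈ P \ TT τ, 0 ≤ σP p) ∧ (∀ z ∈ ZZ P τ ζ, 0 ≤ σZ z) ∧
    (∀ k, (MT A P τ k).Nonempty → 3 ≤ σT k) ∧
    (∀ p ∈ P \ TT τ, (MP A P τ p).Nonempty → 3 ≤ σP p) ∧
    (∀ z ∈ ZZ P τ ζ, (NZ A τ z).card ≠ 2 → 8 ≤ σZ z) ∧
    (∀ z ∈ ZZ P τ ζ, ∀ p ∈ P \ TT τ, A z p → 26 ≤ σZ z) ∧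
    (∀ p ∈ P \ TT τ, mk P τ = ∅ → (MP A P τ p).Nonempty → 26 ≤ σP p) := by
  refine ⟨_, _, _, key_identity hA P hc, ?_, ?_, ?_, ?_, ?_, ?_, ?_, ?_⟩
  · intro k; linarith [(slT hc hcl k).1]
  · intro p hp; linarith [(slP hc hcl p hp).1, Nat.cast_nonneg (α := ℤ) (MP A P τ p).card]
  · intro z hz; linarith [(slZ hc z hz).1, II_nonneg A {z} (P \ TT τ)]
  · intro k hk; linarith [(slT hc hcl k).2 hk]
  · intro p hp h; linarith [(slP hc hcl p hp).2 h, Nat.cast_nonneg (α := ℤ) (MP A P τ p).card]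
  · intro z hz h; linarith [(slZ hc z hz).2 h, II_nonneg A {z} (P \ TT τ)]
  · intro z hz p hp h
    linarith [(slZ hc z hz).1, II_pos (Finset.mem_singleton_self z) hp h]
  · intro p hp hm h
    have h1 : ((tch (mk P τ)).filter (fun h => ζ h = p)).card ≤ bow (MP A P τ p) := by
      unfold bow
      refine Finset.card_le_card ?_
      intro h hh
      rw [Finset.mem_filter] at hh
      have a1 := hc.adj1 h
      have a2 := hc.adj2 h
      rw [hh.2] at a1 a2
      have hn : ∀ i, τ i ∉ P := by
        intro i hi
        have := (mem_mk (τ := τ)).2 hi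
        rw [hm] at this; simp at this
      simp [MP, a1, a2, hn]
    have h2 := (I2 _ h).2
    have h3 : 9 * ((tch (mk P τ)).filter (fun h => ζ h = p)).card + 26
      ≤ 26 * (MP A P τ p).card := by omega
    have h4 : 9 * jj P τ ζ p + 26 ≤ 26 * ((MP A P τ p).card : ℤ) := by
      unfold jj; exact_mod_cast h3
    linarith

/-- basic bound -/
lemma ext0 {A : V → V → Prop} (hA : Sy A) {P : Finset V} {τ : Fin 6 → V}
    {ζ : Fin 7 → V} {h0 : Fin 7} (hc : Conf A τ ζ) (hcl : Cl P τ ζ h0) :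
    Lam A (S2 P τ ζ) ≤
      Lam A P + 43 * (6 - ((mk P τ).card : ℤ)) - 35 * ((tch (mk P τ)).card : ℤ) := by
  obtain ⟨σT, σP, σZ, h, hT, hP, hZ, -⟩ := ext_main hA hc hcl
  have := Finset.sum_nonneg (s := Finset.univ) (fun k _ => hT k)
  have := Finset.sum_nonneg hP
  have := Finset.sum_nonneg hZ
  have := II_nonneg A (ZZ P τ ζ) (ZZ P τ ζ)
  linarith

/-- tight case -/
lemma ext1 {A : V → V → Prop} (hA : Sy A) {P : Finset V} {τ : Fin 6 → V}
    {ζ : Fin 7 → V} {h0 : Fin 7} (hc : Conf A τ ζ) (hcl : Cl P τ ζ h0)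
    (ht : Lam A P + 43 * (6 - ((mk P τ).card : ℤ)) - 35 * ((tch (mk P τ)).card : ℤ) - 2 <
      Lam A (S2 P τ ζ)) :
    (∀ h ∈ tch (mk P τ), ζ h ∉ P ∧ ζ h ∉ TT τ ∧
      ∀ i, A (ζ h) (τ i) → i = (bE h).1 ∨ i = (bE h).2) ∧
    (∀ x ∈ S2 P τ ζ, ∀ y ∈ S2 P τ ζ, A x y → (x ∈ P ∧ y ∈ P) ∨
      (∃ i j, bAdj i j ∧ x = τ i ∧ y = τ j) ∨
      (∃ h ∈ tch (mk P τ), ∃ i, (x = ζ h ∧ y = τ i) ∨ (y = ζ h ∧ x = τ i))) := by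
  obtain ⟨σT, σP, σZ, h, hT, hP, hZ, hT', hP', hZ', hZ'', -⟩ := ext_main hA hc hcl
  have q1 := Finset.sum_nonneg (s := Finset.univ) (fun k _ => hT k)
  have q2 := Finset.sum_nonneg hP
  have q3 := Finset.sum_nonneg hZ
  have q4 := II_nonneg A (ZZ P τ ζ) (ZZ P τ ζ)
  have nT : ∀ k, ¬ (MT A P τ k).Nonempty := by
    intro k hk
    have := hT' k hk
    have := Finset.single_le_sum (f := σT) (fun k _ => hT k) (Finset.mem_univ k)
    linarith
  have nP : ∀ p ∈ P \ TT τ, ¬ (MP A P τ p).Nonempty := by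
    intro k hp hk
    have := hP' k hp hk
    have := Finset.single_le_sum hP hp
    linarith
  have nZ : ∀ z ∈ ZZ P τ ζ, (NZ A τ z).card = 2 := by
    intro k hp
    by_contra hk
    have := hZ' k hp hk
    have := Finset.single_le_sum hZ hp
    linarith
  have nZP : ∀ z ∈ ZZ P τ ζ, ∀ p ∈ P \ TT τ, ¬ A z p := by
    intro k hp p hp' hk
    have := hZ'' k hp p hp' hk
    have := Finset.single_le_sum hZ hp
    linarith
  have nZZ : ∀ z ∈ ZZ P τ ζ, ∀ z' ∈ ZZ P τ ζ, ¬ A z z' := by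
    intro z hz z' hz' hk
    have := II_pos hz hz' hk
    linarith
  have nTT : ∀ i j, A (τ i) (τ j) → ¬ bAdj i j → τ i ∈ P ∧ τ j ∈ P := by
    intro i j h1 h2
    by_contra h3
    exact nT i ⟨j, by simp only [MT, Finset.mem_filter, Finset.mem_univ, true_and]; tauto⟩
  have nPT : ∀ p ∈ P \ TT τ, ∀ i, A p (τ i) → τ i ∈ P := by
    intro p hp i h1
    by_contra h3
    exact nP p hp ⟨i, by simp only [MP, Finset.mem_filter, Finset.mem_univ, true_and]; tauto⟩
  have c1 : ∀ h ∈ tch (mk P τ), ζ h ∉ TT τ := by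
    intro h hh hk
    obtain ⟨k, hk⟩ := mem_TT.1 hk
    rw [mem_tch, mem_mk, mem_mk] at hh
    have a1 := hc.adj1 h
    have a2 := hc.adj2 h
    have a3 := hc.nb h k hk.symm
    rw [← hk] at a1 a2
    exact hh ⟨(nTT _ _ a1 a3.1).2, (nTT _ _ a2 a3.2).2⟩
  have c2 : ∀ h ∈ tch (mk P τ), ζ h ∉ P := by
    intro h hh hk
    have hk' : ζ h ∈ P \ TT τ := Finset.mem_sdiff.2 ⟨hk, c1 h hh⟩
    rw [mem_tch, mem_mk, mem_mk] at hh
    exact hh ⟨nPT _ hk' _ (hc.adj1 h), nPT _ hk' _ (hc.adj2 h)⟩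
  have c3 : ∀ h ∈ tch (mk P τ), ζ h ∈ ZZ P τ ζ := by
    intro h hh
    unfold ZZ
    rw [Finset.mem_sdiff, Finset.mem_union, Finset.mem_image]
    exact ⟨⟨h, hh, rfl⟩, by have := c1 h hh; have := c2 h hh; tauto⟩
  refine ⟨fun h hh => ⟨c2 h hh, c1 h hh, ?_⟩, ?_⟩
  · intro i hi
    have hcard := nZ _ (c3 h hh)
    have hs : ({(bE h).1, (bE h).2} : Finset (Fin 6)) = NZ A τ (ζ h) := by
      apply Finset.eq_of_subset_of_card_le
      · intro j hj
        simp only [Finset.mem_insert, Finset.mem_singleton] at hj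
        simp only [NZ, Finset.mem_filter, Finset.mem_univ, true_and]
        rcases hj with rfl | rfl
        · exact hc.adj1 h
        · exact hc.adj2 h
      · rw [hcard, Finset.card_pair (bE_ne h)]
    have : i ∈ NZ A τ (ζ h) := by simp [NZ, hi]
    rw [← hs] at this
    simpa using this
  · intro x hx y hy hxy
    have hyx := hA hxy
    have zz : ∀ x ∈ ZZ P τ ζ, ∃ h ∈ tch (mk P τ), x = ζ h := by
      intro x hx
      unfold ZZ at hx
      rw [Finset.mem_sdiff, Finset.mem_image] at hx
      obtain ⟨⟨h, hh, h'⟩, _⟩ := hx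
      exact ⟨h, hh, h'.symm⟩
    unfold S2 at hx hy
    rw [Finset.mem_union, Finset.mem_union] at hx hy
    rcases hx with (hx | hx) | hx <;> rcases hy with (hy | hy) | hy
    · left; exact ⟨(Finset.mem_sdiff.1 hx).1, (Finset.mem_sdiff.1 hy).1⟩
    · left
      obtain ⟨i, rfl⟩ := mem_TT.1 hy
      exact ⟨(Finset.mem_sdiff.1 hx).1, nPT _ hx _ hxy⟩
    · exact absurd hyx (nZP _ hy _ hx)
    · left
      obtain ⟨i, rfl⟩ := mem_TT.1 hx
      exact ⟨nPT _ hy _ hyx, (Finset.mem_sdiff.1 hy).1⟩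
    · obtain ⟨i, rfl⟩ := mem_TT.1 hx
      obtain ⟨j, rfl⟩ := mem_TT.1 hy
      by_cases hb : bAdj i j
      · right; left; exact ⟨i, j, hb, rfl, rfl⟩
      · left; exact nTT _ _ hxy hb
    · right; right
      obtain ⟨h, hh, e⟩ := zz _ hy
      obtain ⟨i, rfl⟩ := mem_TT.1 hx
      exact ⟨h, hh, i, Or.inr ⟨e, rfl⟩⟩
    · exact absurd hxy (nZP _ hx _ hy)
    · right; right
      obtain ⟨h, hh, e⟩ := zz _ hx
      obtain ⟨i, rfl⟩ := mem_TT.1 hy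
      exact ⟨h, hh, i, Or.inl ⟨e, rfl⟩⟩
    · exact absurd hxy (nZZ _ hx _ hy)

/-- disjoint case with an extra edge -/
lemma ext2 {A : V → V → Prop} (hA : Sy A) {P : Finset V} {τ : Fin 6 → V}
    {ζ : Fin 7 → V} {h0 : Fin 7} (hc : Conf A τ ζ) (hcl : Cl P τ ζ h0)
    (hm : mk P τ = ∅) {u v : V} (hu : u ∈ P) (hv : v ∈ S2 P τ ζ) (hv' : v ∉ P) (huv : A u v) :
    Lam A (S2 P τ ζ) ≤ Lam A P - 13 := by
  obtain ⟨σT, σP, σZ, h, hT, hP, hZ, hT', hP', hZ', hZ'', hP''⟩ := ext_main hA hc hcl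
  have q1 := Finset.sum_nonneg (s := Finset.univ) (fun k _ => hT k)
  have q2 := Finset.sum_nonneg hP
  have q3 := Finset.sum_nonneg hZ
  have q4 := II_nonneg A (ZZ P τ ζ) (ZZ P τ ζ)
  have hn : ∀ i, τ i ∉ P := by
    intro i hi
    have := (mem_mk (τ := τ)).2 hi
    rw [hm] at this; simp at this
  have hu' : u ∈ P \ TT τ := by
    rw [Finset.mem_sdiff]
    refine ⟨hu, fun h => ?_⟩
    obtain ⟨i, rfl⟩ := mem_TT.1 h
    exact hn i hu
  have ht : (tch (∅ : Finset (Fin 6))).card = 7 := by decide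
  rw [hm, ht] at h
  simp only [Finset.card_empty] at h
  have key : 26 ≤ ∑ p ∈ P \ TT τ, σP p + ∑ z ∈ ZZ P τ ζ, σZ z := by
    unfold S2 at hv
    rw [Finset.mem_union, Finset.mem_union] at hv
    rcases hv with (hv | hv) | hv
    · exact absurd (Finset.mem_sdiff.1 hv).1 hv'
    · obtain ⟨i, rfl⟩ := mem_TT.1 hv
      have := hP'' u hu' hm ⟨i, by simp [MP, huv, hn]⟩
      have := Finset.single_le_sum hP hu'
      linarith
    · have := hZ'' v hv u hu' (hA huv)
      have := Finset.single_le_sum hZ hv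
      linarith
  push_cast at h
  linarith

end ext

section det
variable {V : Type}

structure Col (red blue : Sym2 V → Prop) (pos : Sym2 V → ℕ) : Prop where
  disj : ∀ e, red e → blue e → False
  loop : ∀ x, ¬ red s(x, x)
  inj : ∀ e e', red e → red e' → pos e = pos e' → e = e'
  F1 : ∀ x y, blue s(x, y) → ∃ z, (red s(z, x) ∧ pos s(z, x) < pos s(x, y)) ∧
    (red s(z, y) ∧ pos s(z, y) < pos s(x, y))
  F2 : ∀ x y z, red s(x, y) → red s(z, x) → red s(z, y) → pos s(z, x) < pos s(x, y) →
    pos s(z, y) < pos s(x, y) → ∃ τ : Fin 6 → V, Function.Injective τ ∧ ∃ h0 : Fin 7,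
      s(τ (bE h0).1, τ (bE h0).2) = s(x, y) ∧ ∀ h, h ≠ h0 →
        blue s(τ (bE h).1, τ (bE h).2) ∧ pos s(τ (bE h).1, τ (bE h).2) < pos s(x, y)

structure Thr (red blue : Sym2 V → Prop) (pos : Sym2 V → ℕ) (a b c : V) (τ : Fin 6 → V)
    (ζ : Fin 7 → V) (h0 : Fin 7) : Prop where
  hred : red s(a, b)
  inj : Function.Injective τ
  e0 : s(τ (bE h0).1, τ (bE h0).2) = s(a, b)
  z0 : ζ h0 = c
  bl : ∀ h, h ≠ h0 → blue s(τ (bE h).1, τ (bE h).2) ∧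
    pos s(τ (bE h).1, τ (bE h).2) < pos s(a, b)
  r1 : ∀ h, red s(ζ h, τ (bE h).1) ∧ pos s(ζ h, τ (bE h).1) < pos s(a, b)
  r2 : ∀ h, red s(ζ h, τ (bE h).2) ∧ pos s(ζ h, τ (bE h).2) < pos s(a, b)

variable {red blue : Sym2 V → Prop} {pos : Sym2 V → ℕ}

lemma thr_exists (hC : Col red blue pos) {a b c : V} (h1 : red s(a, b)) (h2 : red s(c, a))
    (h3 : red s(c, b)) (p1 : pos s(c, a) < pos s(a, b)) (p2 : pos s(c, b) < pos s(a, b)) :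
    ∃ τ ζ h0, Thr red blue pos a b c τ ζ h0 := by
  obtain ⟨τ, hτ, h0, he, hb⟩ := hC.F2 a b c h1 h2 h3 p1 p2
  have : ∀ h : Fin 7, ∃ z, (h = h0 → z = c) ∧
      (red s(z, τ (bE h).1) ∧ pos s(z, τ (bE h).1) < pos s(a, b)) ∧
      (red s(z, τ (bE h).2) ∧ pos s(z, τ (bE h).2) < pos s(a, b)) := by
    intro h
    by_cases hh : h = h0
    · subst hh
      refine ⟨c, fun _ => rfl, ?_⟩
      rw [Sym2.eq_iff] at he
      rcases he with ⟨e1, e2⟩ | ⟨e1, e2⟩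
      · rw [e1, e2]; exact ⟨⟨h2, p1⟩, ⟨h3, p2⟩⟩
      · rw [e1, e2]; exact ⟨⟨h3, p2⟩, ⟨h2, p1⟩⟩
    · obtain ⟨hb1, hb2⟩ := hb h hh
      obtain ⟨z, ⟨q1, q2⟩, q3, q4⟩ := hC.F1 _ _ hb1
      exact ⟨z, fun h => absurd h hh, ⟨q1, q2.trans hb2⟩, ⟨q3, q4.trans hb2⟩⟩
  choose ζ hz1 hz2 hz3 using this
  exact ⟨τ, ζ, h0, ⟨h1, hτ, he, hz1 h0 rfl, hb, hz2, hz3⟩⟩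

lemma thr_tri (hC : Col red blue pos) {x y z : V} (hxy : red s(x, y)) (hxz : red s(x, z))
    (hyz : red s(y, z)) :
    ∃ a b c τ ζ h0, Thr red blue pos a b c τ ζ h0 ∧
      ∀ w, (w = a ∨ w = b ∨ w = c) ↔ (w = x ∨ w = y ∨ w = z) := by
  have nxy : x ≠ y := by rintro rfl; exact hC.loop _ hxy
  have nxz : x ≠ z := by rintro rfl; exact hC.loop _ hxz
  have nyz : y ≠ z := by rintro rfl; exact hC.loop _ hyz
  have d1 : pos s(x, y) ≠ pos s(x, z) := by
    intro h; have := hC.inj _ _ hxy hxz h; simp at this; tauto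
  have d2 : pos s(x, y) ≠ pos s(y, z) := by
    intro h; have := hC.inj _ _ hxy hyz h; simp at this; tauto
  have d3 : pos s(x, z) ≠ pos s(y, z) := by
    intro h; have := hC.inj _ _ hxz hyz h; simp at this; tauto
  have cases : (pos s(x, z) < pos s(x, y) ∧ pos s(y, z) < pos s(x, y)) ∨
    (pos s(x, y) < pos s(x, z) ∧ pos s(y, z) < pos s(x, z)) ∨
    (pos s(x, y) < pos s(y, z) ∧ pos s(x, z) < pos s(y, z)) := by omega
  rcases cases with ⟨h1, h2⟩ | ⟨h1, h2⟩ | ⟨h1, h2⟩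
  · rw [Sym2.eq_swap (a := x) (b := z)] at hxz h1
    rw [Sym2.eq_swap (a := y) (b := z)] at hyz h2
    obtain ⟨τ, ζ, h0, h⟩ := thr_exists hC hxy hxz hyz h1 h2
    exact ⟨x, y, z, τ, ζ, h0, h, fun w => by tauto⟩
  · rw [Sym2.eq_swap (a := x) (b := y)] at hxy h1
    obtain ⟨τ, ζ, h0, h⟩ := thr_exists hC hxz hxy hyz h1 h2
    exact ⟨x, z, y, τ, ζ, h0, h, fun w => by tauto⟩
  · obtain ⟨τ, ζ, h0, h⟩ := thr_exists hC hyz hxy hxz h1 h2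
    exact ⟨y, z, x, τ, ζ, h0, h, fun w => by tauto⟩

lemma Thr.conf (hC : Col red blue pos) {a b c : V} {τ : Fin 6 → V} {ζ : Fin 7 → V} {h0 : Fin 7}
    (h : Thr red blue pos a b c τ ζ h0) (B : V → V → Prop)
    (hB : ∀ x y, red s(x, y) ∨ blue s(x, y) → pos s(x, y) ≤ pos s(a, b) → B x y) :
    Conf B τ ζ := by
  have nb : ∀ k i, bAdj k i → red s(τ k, τ i) → pos s(τ k, τ i) < pos s(a, b) → False := by
    intro k i hk hr hp
    obtain ⟨h', h''⟩ := hk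
    have e : s(τ k, τ i) = s(τ (bE h').1, τ (bE h').2) := by
      rcases h'' with h'' | h'' <;> rw [h'']
      exact Sym2.eq_swap
    rw [e] at hr hp
    by_cases h1 : h' = h0
    · subst h1; rw [h.e0] at hp; exact lt_irrefl _ hp
    · exact hC.disj _ hr (h.bl h' h1).1
  refine ⟨h.inj, ?_, ?_, ?_, ?_⟩
  · intro h'
    by_cases h1 : h' = h0
    · subst h1; apply hB
      · rw [h.e0]; exact Or.inl h.hred
      · rw [h.e0]
    · exact hB _ _ (Or.inr (h.bl h' h1).1) (h.bl h' h1).2.le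
  · intro h'; exact hB _ _ (Or.inl (h.r1 h').1) (h.r1 h').2.le
  · intro h'; exact hB _ _ (Or.inl (h.r2 h').1) (h.r2 h').2.le
  · intro h' k hk
    have h1 := h.r1 h'
    have h2 := h.r2 h'
    rw [hk] at h1 h2
    exact ⟨fun hb => nb _ _ hb h1.1 h1.2, fun hb => nb _ _ hb h2.1 h2.2⟩

lemma Lam_mono {A A' : V → V → Prop} (h : ∀ x y, A' x y → A x y) (S : Finset V) :
    Lam A S ≤ Lam A' S := by
  unfold Lam II
  have : ∑ x ∈ S, ∑ y ∈ S, av A' x y ≤ ∑ x ∈ S, ∑ y ∈ S, av A x y := by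
    refine Finset.sum_le_sum fun x _ => Finset.sum_le_sum fun y _ => ?_
    unfold av
    have hxy := h x y
    by_cases h1 : A' x y
    · simp [h1, hxy h1]
    · rw [if_neg h1]; split_ifs <;> norm_num
  linarith

lemma Lam_insert {A : V → V → Prop} (hA : Sy A) {P : Finset V} {x y z : V} (hx : x ∉ P)
    (hy : y ∈ P) (hz : z ∈ P) (hyz : y ≠ z) (h1 : A x y) (h2 : A x z) :
    Lam A (insert x P) ≤ Lam A P - 9 := by
  have d : Disjoint {x} P := by simpa using hx
  unfold Lam
  rw [Finset.insert_eq, II_union_left d, II_union_right d, II_union_right d, II_comm hA P {x},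
    Finset.card_union_of_disjoint d]
  have := II_nonneg A {x} {x}
  have h3 : 2 ≤ II A {x} P := by
    have e : P = {y} ∪ (P.erase y) := by
      rw [← Finset.insert_eq, Finset.insert_erase hy]
    have d' : Disjoint {y} (P.erase y) := by simp
    rw [e, II_union_right d']
    have := II_pos (Finset.mem_singleton_self x) (Finset.mem_singleton_self y) h1
    have := II_pos (Finset.mem_singleton_self x) (Finset.mem_erase.2 ⟨hyz.symm, hz⟩) h2
    linarith
  simp only [Finset.card_singleton]
  push_cast
  linarith

lemma Lam_edge {A A' : V → V → Prop} (hA : Sy A) (h : ∀ x y, A' x y → A x y) {S : Finset V}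
    {x y : V} (hx : x ∈ S) (hy : y ∈ S) (hxy : x ≠ y) (h1 : A x y) (h2 : ¬ A' x y)
    (h3 : ¬ A' y x) : Lam A S ≤ Lam A' S - 26 := by
  unfold Lam
  have : II A' S S + 2 ≤ II A S S := by
    have e : ∀ B : V → V → Prop, II B S S = II B {x} {y} + II B {x} (S.erase y) +
        (II B {y} {x} + II B {y} (S.erase x)) + II B ((S.erase x).erase y) S := by
      intro B
      have d1 : Disjoint {x} (S.erase x) := by simp
      have d2 : Disjoint {y} ((S.erase x).erase y) := by simp
      have e1 : S = {x} ∪ S.erase x := by rw [← Finset.insert_eq, Finset.insert_erase hx]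
      have e2 : S.erase x = {y} ∪ (S.erase x).erase y := by
        rw [← Finset.insert_eq, Finset.insert_erase (Finset.mem_erase.2 ⟨hxy.symm, hy⟩)]
      have e3 : S = {y} ∪ S.erase y := by rw [← Finset.insert_eq, Finset.insert_erase hy]
      have d3 : Disjoint {y} (S.erase y) := by simp
      have q1 : II B S S = II B {x} S + II B {y} S + II B ((S.erase x).erase y) S := by
        conv_lhs => rw [e1, II_union_left d1, ← e1]
        conv_lhs => rw [e2, II_union_left d2]
        ring
      have q2 : II B {x} S = II B {x} {y} + II B {x} (S.erase y) := by
        conv_lhs => rw [e3, II_union_right d3]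
      have q3 : II B {y} S = II B {y} {x} + II B {y} (S.erase x) := by
        conv_lhs => rw [e1, II_union_right d1]
      rw [q1, q2, q3]
    have mono : ∀ X Y : Finset V, II A' X Y ≤ II A X Y := by
      intro X Y
      refine Finset.sum_le_sum fun x _ => Finset.sum_le_sum fun y _ => ?_
      unfold av
      have hxy := h x y
      by_cases h1 : A' x y
      · simp [h1, hxy h1]
      · rw [if_neg h1]; split_ifs <;> norm_num
    rw [e A, e A']
    have t1 : II A {x} {y} = 1 := by simp only [II, Finset.sum_singleton, av, if_pos h1]
    have t2 : II A {y} {x} = 1 := by simp only [II, Finset.sum_singleton, av, if_pos (hA h1)]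
    have t3 : II A' {x} {y} = 0 := by simp only [II, Finset.sum_singleton, av, if_neg h2]
    have t4 : II A' {y} {x} = 0 := by simp only [II, Finset.sum_singleton, av, if_neg h3]
    have := mono {x} (S.erase y)
    have := mono {y} (S.erase x)
    have := mono ((S.erase x).erase y) S
    linarith
  linarith

set_option maxHeartbeats 2000000 in
lemma core (hC : Col red blue pos) {a b c a' b' c' : V} {τ τ' : Fin 6 → V} {ζ ζ' : Fin 7 → V}
    {h0 h0' : Fin 7} (H : Thr red blue pos a b c τ ζ h0) (H' : Thr red blue pos a' b' c' τ' ζ' h0')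
    (hpos : pos s(a, b) < pos s(a', b')) {u v : V} (hu : u = a ∨ u = b ∨ u = c)
    (hv : v = a' ∨ v = b' ∨ v = c')
    (hdis : ∀ w, (w = a ∨ w = b ∨ w = c) → (w = a' ∨ w = b' ∨ w = c') → False)
    (hf : red s(u, v)) :
    ∃ S : Finset V, S.Nonempty ∧ S.card ≤ 27 ∧
      Lam (fun x y => red s(x, y) ∨ blue s(x, y)) S ≤ 0 := by
  set A : V → V → Prop := fun x y => red s(x, y) ∨ blue s(x, y) with hAdef
  set A' : V → V → Prop := fun x y => (red s(x, y) ∨ blue s(x, y)) ∧ s(x, y) ≠ s(a', b') with hA'def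
  have hA : Sy A := by
    intro x y h; simp only [hAdef] at h ⊢; rwa [Sym2.eq_swap (a := y)]
  have hA' : Sy A' := by
    intro x y h; simp only [hA'def] at h ⊢; rwa [Sym2.eq_swap (a := y)]
  have hAA : ∀ x y, A' x y → A x y := fun x y h => h.1
  by_contra hno
  have hno' : ∀ S : Finset V, S.Nonempty → S.card ≤ 27 → 0 < Lam A S := by
    intro S h1 h2
    by_contra h3
    exact hno ⟨S, h1, h2, not_lt.1 h3⟩
  have c1 : Conf A' τ ζ := by
    refine H.conf hC A' fun x y h1 h2 => ⟨h1, fun h3 => ?_⟩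
    rw [h3] at h2; omega
  have c2 : Conf A τ' ζ' := H'.conf hC A fun x y h1 h2 => h1
  -- the set U
  set U := S2 ∅ τ ζ with hU
  have cl1 : Cl ∅ τ ζ h0 := by intro h _ h2; simp at h2
  have mk0 : mk (∅ : Finset V) τ = ∅ := by simp [mk]
  have tc0 : (tch (∅ : Finset (Fin 6))).card = 7 := by decide
  have lam0 : Lam A' (∅ : Finset V) = 0 := by simp [Lam, II]
  have hLU : Lam A' U ≤ 13 := by
    have := ext0 hA' c1 cl1
    rw [mk0, tc0, lam0] at this
    simpa using this
  have hcU : U.card ≤ 13 := by simpa using card_S2 ∅ τ ζ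
  have tmem : ∀ h, h ∈ tch (mk (∅ : Finset V) τ) := by intro h; rw [mk0, mem_tch]; simp
  have haU : (a ∈ U ∧ a ∈ TT τ) ∧ (b ∈ U ∧ b ∈ TT τ) := by
    have := H.e0
    rw [Sym2.eq_iff] at this
    rcases this with ⟨e1, e2⟩ | ⟨e1, e2⟩ <;> rw [← e1, ← e2] <;>
      exact ⟨⟨tau_mem_S2 _ _ _ _, tau_mem_TT _ _⟩, ⟨tau_mem_S2 _ _ _ _, tau_mem_TT _ _⟩⟩
  have hcU' : c ∈ U := by rw [← H.z0]; exact zeta_mem_S2 (tmem _)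
  have huU : u ∈ U := by
    rcases hu with rfl | rfl | rfl
    · exact haU.1.1
    · exact haU.2.1
    · exact hcU'
  -- the closed set P
  have hP : ∃ P : Finset V, U ⊆ P ∧ P.card ≤ 14 ∧ Lam A' P ≤ 13 ∧ (P = U ∨ Lam A' P ≤ 4) ∧
      ∀ x ∉ P, ∀ y ∈ P, ∀ z ∈ P, y ≠ z → A' x y → A' x z → False := by
    by_cases hcl : ∀ x ∉ U, ∀ y ∈ U, ∀ z ∈ U, y ≠ z → A' x y → A' x z → False
    · exact ⟨U, subset_rfl, by omega, hLU, Or.inl rfl, hcl⟩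
    · push Not at hcl
      obtain ⟨x, hx, y, hy, z, hz, hyz, h1, h2, -⟩ := hcl
      have hL1 := Lam_insert hA' hx hy hz hyz h1 h2
      have hcc : (insert x U).card ≤ 14 := (Finset.card_insert_le _ _).trans (by omega)
      refine ⟨insert x U, Finset.subset_insert _ _, hcc, by linarith, Or.inr (by linarith), ?_⟩
      intro x' hx' y' hy' z' hz' hyz' h1' h2'
      have hL2 := Lam_insert hA' hx' hy' hz' hyz' h1' h2'
      have := hno' (insert x' (insert x U)) (Finset.insert_nonempty _ _)
        ((Finset.card_insert_le _ _).trans (by omega))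
      have := Lam_mono hAA (insert x' (insert x U))
      linarith
  obtain ⟨P, hUP, hPc, hP13, hP4, hPcl⟩ := hP
  have huP := hUP huU
  have hLP : Lam A P ≤ Lam A' P := Lam_mono hAA P
  have hab' : a' ≠ b' := by
    rintro rfl; exact hC.loop _ H'.hred
  -- e2 not inside P
  have hnot : ¬ (a' ∈ P ∧ b' ∈ P) := by
    rintro ⟨h1, h2⟩
    have := Lam_edge hA hAA h1 h2 hab' (Or.inl H'.hred) (fun h => h.2 rfl)
      (fun h => h.2 Sym2.eq_swap)
    have := hno' P ⟨a', h1⟩ (by omega)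
    linarith
  have htau0 : ¬ (τ' (bE h0').1 ∈ P ∧ τ' (bE h0').2 ∈ P) := by
    have := H'.e0
    rw [Sym2.eq_iff] at this
    rcases this with ⟨e1, e2⟩ | ⟨e1, e2⟩ <;> rw [e1, e2]
    · exact hnot
    · exact fun h => hnot h.symm
  have cl2 : Cl P τ' ζ' h0' := by
    have ne : ∀ h, h ≠ h0' → A' (τ' (bE h).1) (τ' (bE h).2) := by
      intro h hh
      refine ⟨Or.inr (H'.bl h hh).1, fun h3 => ?_⟩
      have := (H'.bl h hh).2
      rw [h3] at this; omega
    have ne1 : ∀ h, A' (ζ' h) (τ' (bE h).1) := by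
      intro h
      refine ⟨Or.inl (H'.r1 h).1, fun h3 => ?_⟩
      have := (H'.r1 h).2
      rw [h3] at this; omega
    have ne2 : ∀ h, A' (ζ' h) (τ' (bE h).2) := by
      intro h
      refine ⟨Or.inl (H'.r2 h).1, fun h3 => ?_⟩
      have := (H'.r2 h).2
      rw [h3] at this; omega
    intro h hh hz
    constructor
    · intro h1
      by_contra h2
      refine hPcl _ h2 _ h1 _ hz ?_ (hA' (ne h hh)) (hA' (ne2 h))
      intro e
      have := (H'.r1 h).1
      rw [← e] at this
      exact hC.loop _ this
    · intro h1
      by_contra h2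
      refine hPcl _ h2 _ h1 _ hz ?_ (ne h hh) (hA' (ne1 h))
      intro e
      have := (H'.r2 h).1
      rw [← e] at this
      exact hC.loop _ this
  have hS2ne : (S2 P τ' ζ').Nonempty := ⟨_, tau_mem_S2 P τ' ζ' 0⟩
  have hS2c : (S2 P τ' ζ').card ≤ 27 := (card_S2 _ _ _).trans (by omega)
  have hS2pos := hno' _ hS2ne hS2c
  have hb0 := ext0 hA c2 cl2
  have ht0 : h0' ∈ tch (mk P τ') := by rw [mem_tch, mem_mk, mem_mk]; exact htau0
  have haT : a' ∈ TT τ' ∧ b' ∈ TT τ' := by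
    have := H'.e0
    rw [Sym2.eq_iff] at this
    rcases this with ⟨e1, e2⟩ | ⟨e1, e2⟩ <;> rw [← e1, ← e2] <;>
      exact ⟨tau_mem_TT _ _, tau_mem_TT _ _⟩
  have hTS : ∀ x ∈ TT τ', x ∈ S2 P τ' ζ' := by
    intro x hx; obtain ⟨i, rfl⟩ := mem_TT.1 hx; exact tau_mem_S2 _ _ _ _
  have hcS : c' ∈ S2 P τ' ζ' := by rw [← H'.z0]; exact zeta_mem_S2 ht0
  have hvS : v ∈ S2 P τ' ζ' := by
    rcases hv with rfl | rfl | rfl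
    · exact hTS _ haT.1
    · exact hTS _ haT.2
    · exact hcS
  have hI3 := I3 (mk P τ')
  have bad : (mk P τ' = {0,1,2} ∨ mk P τ' = {3,4,5}) → False := by
    intro hbad
    have hval : 43 * (6 - ((mk P τ').card : ℤ)) - 35 * ((tch (mk P τ')).card : ℤ) = -11 := by
      rcases hbad with e | e <;> rw [e] <;> decide
    have hP' : P = U := by
      rcases hP4 with h | h
      · exact h
      · linarith
    have hUpos : 11 < Lam A' U := by rw [← hP']; linarith
    have t1 := ext1 hA' c1 cl1 (by rw [mk0, tc0, lam0]; simp; linarith)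
    have t2 := ext1 hA c2 cl2 (by linarith)
    have nv : ∀ w, (w = a' ∨ w = b') → w = u → False := by
      intro w h1 h2
      exact hdis u hu (by rw [← h2]; rcases h1 with h | h <;> simp [h])
    have e0' : ∀ i, (i = (bE h0').1 ∨ i = (bE h0').2) → (τ' i = a' ∨ τ' i = b') := by
      have := H'.e0
      rw [Sym2.eq_iff] at this
      rcases this with ⟨e1, e2⟩ | ⟨e1, e2⟩ <;> rintro i (rfl | rfl) <;> simp [e1, e2]
    have e0 : ∀ i, (i = (bE h0).1 ∨ i = (bE h0).2) → (τ i = a ∨ τ i = b) := by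
      have := H.e0
      rw [Sym2.eq_iff] at this
      rcases this with ⟨e1, e2⟩ | ⟨e1, e2⟩ <;> rintro i (rfl | rfl) <;> simp [e1, e2]
    have hfne' : s(u, v) ≠ s(a', b') := by
      intro h
      rw [Sym2.eq_iff] at h
      rcases h with ⟨h, _⟩ | ⟨h, _⟩
      · exact nv a' (Or.inl rfl) h.symm
      · exact nv b' (Or.inr rfl) h.symm
    have hfne : s(u, v) ≠ s(a, b) := by
      intro h
      rw [Sym2.eq_iff] at h
      rcases h with ⟨_, h⟩ | ⟨_, h⟩
      · exact hdis v (Or.inr (Or.inl h)) hv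
      · exact hdis v (Or.inl h) hv
    -- red edges of bowties
    have redb' : ∀ i j, bAdj i j → red s(τ' i, τ' j) → s(τ' i, τ' j) = s(a', b') := by
      rintro i j ⟨h, hh⟩ hr
      have e : s(τ' i, τ' j) = s(τ' (bE h).1, τ' (bE h).2) := by
        rcases hh with hh | hh <;> rw [hh]
        exact Sym2.eq_swap
      by_cases h1 : h = h0'
      · rw [e, h1, H'.e0]
      · rw [e] at hr; exact (hC.disj _ hr (H'.bl h h1).1).elim
    have redb : ∀ i j, bAdj i j → red s(τ i, τ j) → s(τ i, τ j) = s(a, b) := by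
      rintro i j ⟨h, hh⟩ hr
      have e : s(τ i, τ j) = s(τ (bE h).1, τ (bE h).2) := by
        rcases hh with hh | hh <;> rw [hh]
        exact Sym2.eq_swap
      by_cases h1 : h = h0
      · rw [e, h1, H.e0]
      · rw [e] at hr; exact (hC.disj _ hr (H.bl h h1).1).elim
    by_cases hvP : v ∈ P
    · have hvc : v ≠ c' := by
        rintro rfl
        have := (t2.1 h0' ht0).1
        rw [H'.z0] at this; exact this hvP
      have hvab : v = a' ∨ v = b' := by
        rcases hv with h | h | h
        · exact Or.inl h
        · exact Or.inr h
        · exact absurd h hvc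
      -- v lies on a blue edge inside P
      have hbl : ∃ w ∈ P, blue s(v, w) := by
        have hvi : ∃ i, τ' i = v := by
          rcases hvab with h | h
          · rw [h]; exact mem_TT.1 haT.1
          · rw [h]; exact mem_TT.1 haT.2
        obtain ⟨i, hi⟩ := hvi
        have him : i ∈ mk P τ' := by rw [mem_mk, hi]; exact hvP
        have hcomb : ∀ m : Finset (Fin 6), (m = {0,1,2} ∨ m = {3,4,5}) → ∀ i ∈ m,
            ∃ h, (bE h).1 ∈ m ∧ (bE h).2 ∈ m ∧ ((bE h).1 = i ∨ (bE h).2 = i) := by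
          rintro m (rfl | rfl) <;> decide
        obtain ⟨h, q1, q2, q3⟩ := hcomb _ hbad i him
        rw [mem_mk] at q1 q2
        have hh : h ≠ h0' := by rintro rfl; exact htau0 ⟨q1, q2⟩
        have hb := (H'.bl h hh).1
        rcases q3 with q3 | q3
        · rw [q3, hi] at hb; exact ⟨_, q2, hb⟩
        · rw [q3, hi, Sym2.eq_swap] at hb; exact ⟨_, q1, hb⟩
      obtain ⟨w, hw, hbw⟩ := hbl
      have hvU : v ∈ U := hP' ▸ hvP
      have hwU : w ∈ U := hP' ▸ hw
      have bne : A' v w := ⟨Or.inr hbw, fun h => hC.disj _ H'.hred (h ▸ hbw)⟩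
      have hvT : v ∈ TT τ := by
        rcases t1.2 v hvU w hwU bne with h | ⟨i, j, _, h, _⟩ | ⟨h, hh, i, h1⟩
        · simp at h
        · rw [h]; exact tau_mem_TT _ _
        · rcases h1 with ⟨h1, _⟩ | ⟨h1, h2⟩
          · -- the edge s(ζ h, τ i) is red, contradiction
            rename_i h2
            exfalso
            have hi := (t1.1 h hh).2.2 i (by rw [← h1, ← h2]; exact bne)
            have r : red s(ζ h, τ i) := by
              rcases hi with rfl | rfl
              · exact (H.r1 h).1
              · exact (H.r2 h).1
            rw [← h1, ← h2] at r
            exact hC.disj _ r hbw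
          · rw [h2]; exact tau_mem_TT _ _
      have hfA : A' u v := ⟨Or.inl hf, hfne'⟩
      rcases t1.2 u huU v hvU hfA with h | ⟨i, j, hb, e1, e2⟩ | ⟨h, hh, i, h1⟩
      · simp at h
      · have := redb i j hb (by rw [← e1, ← e2]; exact hf)
        rw [← e1, ← e2] at this
        exact hfne this
      · rcases h1 with ⟨h1, h2⟩ | ⟨h1, h2⟩
        · have huT : u ∉ TT τ := h1 ▸ (t1.1 h hh).2.1
          have huc : u = c := by
            rcases hu with h | h | h
            · exact absurd (h ▸ haU.1.2) huT
            · exact absurd (h ▸ haU.2.2) huT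
            · exact h
          have := (t1.1 h0 (tmem _)).2.2 i (by rw [H.z0, ← huc, ← h2]; exact hfA)
          have := e0 i this
          rw [← h2] at this
          exact hdis v (by rcases this with h | h <;> simp [h]) hv
        · exact (t1.1 h hh).2.1 (h1 ▸ hvT)
    · have huS : u ∈ S2 P τ' ζ' := subset_S2_P _ _ _ huP
      rcases t2.2 u huS v hvS (Or.inl hf) with h | ⟨i, j, hb, e1, e2⟩ | ⟨h, hh, i, h1⟩
      · exact hvP h.2
      · have := redb' i j hb (by rw [← e1, ← e2]; exact hf)
        rw [← e1, ← e2] at this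
        exact hfne' this
      · rcases h1 with ⟨h1, _⟩ | ⟨h1, h2⟩
        · exact (t2.1 h hh).1 (h1 ▸ huP)
        · have hvT : v ∉ TT τ' := h1 ▸ (t2.1 h hh).2.1
          have hvc : v = c' := by
            rcases hv with h | h | h
            · exact absurd (h ▸ haT.1) hvT
            · exact absurd (h ▸ haT.2) hvT
            · exact h
          have := (t2.1 h0' ht0).2.2 i (by rw [H'.z0, ← hvc, ← h2]; exact hA (Or.inl hf))
          have := e0' i this
          exact nv (τ' i) this h2.symm
  rcases hI3 with h | h | h | h | h
  · linarith
  · -- disjoint case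
    have hn : ∀ x ∈ TT τ', x ∉ P := by
      intro x hx hi
      obtain ⟨i, rfl⟩ := mem_TT.1 hx
      have := (mem_mk (τ := τ')).2 hi
      rw [h] at this; simp at this
    by_cases hvP : v ∈ P
    · have hvc : v = c' := by
        rcases hv with e | e | e
        · exact absurd hvP (e ▸ hn _ haT.1)
        · exact absurd hvP (e ▸ hn _ haT.2)
        · exact e
      have := ext2 hA c2 cl2 h hvP (tau_mem_S2 P τ' ζ' (bE h0').1) (hn _ (tau_mem_TT _ _))
        (by rw [hvc, ← H'.z0]; exact c2.adj1 h0')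
      linarith
    · have := ext2 hA c2 cl2 h huP hvS hvP (Or.inl hf)
      linarith
  · apply htau0
    rw [← mem_mk (P := P), ← mem_mk (P := P), h]; simp
  · exact bad (Or.inl h)
  · exact bad (Or.inr h)

theorem det_main (hC : Col red blue pos) (ρ : Fin 6 → V) (hρ : Function.Injective ρ)
    (hr : ∀ h, red s(ρ (bE h).1, ρ (bE h).2)) :
    ∃ S : Finset V, S.Nonempty ∧ S.card ≤ 27 ∧
      Lam (fun x y => red s(x, y) ∨ blue s(x, y)) S ≤ 0 := by
  obtain ⟨a, b, c, τ, ζ, h0, H, hw⟩ := thr_tri hC (hr 0) (hr 1) (hr 2)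
  obtain ⟨a', b', c', τ', ζ', h0', H', hw'⟩ := thr_tri hC (hr 3) (hr 4) (hr 5)
  have hf := hr 6
  simp only [bE, Matrix.cons_val] at hw hw' hf
  have hdis : ∀ w, (w = a ∨ w = b ∨ w = c) → (w = a' ∨ w = b' ∨ w = c') → False := by
    intro w h1 h2
    rw [hw] at h1
    rw [hw'] at h2
    rcases h1 with rfl | rfl | rfl <;> rcases h2 with h | h | h <;>
      exact absurd (hρ h) (by decide)
  have hu := (hw (ρ 0)).2 (Or.inl rfl)
  have hv := (hw' (ρ 3)).2 (Or.inl rfl)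
  have hne : pos s(a, b) ≠ pos s(a', b') := by
    intro h
    have := hC.inj _ _ H.hred H'.hred h
    rw [Sym2.eq_iff] at this
    rcases this with ⟨h, _⟩ | ⟨h, _⟩
    · exact hdis a (by tauto) (by tauto)
    · exact hdis a (by tauto) (by tauto)
  rcases lt_or_gt_of_ne hne with h | h
  · exact core hC H H' h hu hv hdis hf
  · exact core hC H' H h hv hu (fun w h1 h2 => hdis w h2 h1) (by rwa [Sym2.eq_swap])

end det

section game
variable {V : Type}

def closes (h : EdgeHistory V 2) (e : Sym2 V) : Prop :=
  ∃ x y z : V, e = s(x, y) ∧ (s(z, x), (0 : Fin 2)) ∈ h ∧ (s(z, y), (0 : Fin 2)) ∈ h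

def bowc (h : EdgeHistory V 2) (e : Sym2 V) : Prop :=
  ∃ τ : Fin 6 → V, Function.Injective τ ∧ ∃ h0 : Fin 7,
    s(τ (bE h0).1, τ (bE h0).2) = e ∧ ∀ h', h' ≠ h0 →
      (s(τ (bE h').1, τ (bE h').2), (1 : Fin 2)) ∈ h

noncomputable def strat : PainterStrategy V 2 := fun h e => if closes h e ∧ ¬ bowc h e then 1 else 0

lemma strat_one {h : EdgeHistory V 2} {e : Sym2 V} (hs : (1 : Fin 2) = strat h e) :
    closes h e ∧ ¬ bowc h e := by
  by_contra hc
  simp [strat, if_neg hc] at hs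

lemma strat_zero {h : EdgeHistory V 2} {e : Sym2 V} (hs : (0 : Fin 2) = strat h e) :
    ¬ (closes h e ∧ ¬ bowc h e) := by
  intro hc
  simp [strat, if_pos hc] at hs

def Ok (π : PainterStrategy V 2) (h : EdgeHistory V 2) : Prop :=
  ∀ h1 e c h2, h = h1 ++ (e, c) :: h2 → c = π h1 e

lemma Ok.snoc {π : PainterStrategy V 2} {h : EdgeHistory V 2} (hh : Ok π h) (e : Sym2 V) :
    Ok π (h ++ [(e, π h e)]) := by
  intro h1 e' c h2 heq
  rcases List.eq_nil_or_concat h2 with rfl | ⟨h3, x, rfl⟩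
  · have := List.append_inj' heq rfl
    obtain ⟨rfl, h4⟩ := this
    simp at h4
    obtain ⟨rfl, rfl⟩ := h4
    rfl
  · rw [List.concat_eq_append, ← List.cons_append, ← List.append_assoc] at heq
    have := List.append_inj' heq rfl
    exact hh _ _ _ _ this.1

lemma run_aux (π : PainterStrategy V 2) (l : List (Sym2 V)) (h : EdgeHistory V 2) (hh : Ok π h) :
    Ok π (runPainterAux π h l) ∧ (runPainterAux π h l).map Prod.fst = h.map Prod.fst ++ l := by
  induction l generalizing h with
  | nil => simp [runPainterAux, hh]
  | cons e es ih =>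
    have := ih _ (hh.snoc e)
    simp only [runPainterAux]
    refine ⟨this.1, ?_⟩
    rw [this.2]; simp

lemma run_ok (π : PainterStrategy V 2) (l : List (Sym2 V)) :
    Ok π (runPainter π l) ∧ (runPainter π l).map Prod.fst = l := by
  have := run_aux π l [] (by intro h1 e c h2 h; simp at h)
  simpa [runPainter] using this

lemma past {π : PainterStrategy V 2} {h : EdgeHistory V 2} {l : List (Sym2 V)} (hok : Ok π h)
    (hm : h.map Prod.fst = l) (hl : l.Nodup) {e : Sym2 V} {c : Fin 2} (hec : (e, c) ∈ h) :
    ∃ h1, c = π h1 e ∧ ∀ e' c', (e', c') ∈ h1 ↔ (e', c') ∈ h ∧ l.idxOf e' < l.idxOf e := by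
  obtain ⟨h1, h2, rfl⟩ := List.append_of_mem hec
  refine ⟨h1, hok _ _ _ _ rfl, ?_⟩
  simp only [List.map_append, List.map_cons] at hm
  subst hm
  rw [List.nodup_append] at hl
  obtain ⟨n1, n2, n3⟩ := hl
  have he : e ∉ h1.map Prod.fst := fun hh => n3 _ hh _ (by simp) rfl
  have hpe : (h1.map Prod.fst ++ e :: h2.map Prod.fst).idxOf e = (h1.map Prod.fst).length := by
    rw [List.idxOf_append_of_notMem he]; simp
  intro e' c'
  rw [hpe]
  constructor
  · intro hh
    have : e' ∈ h1.map Prod.fst := List.mem_map.2 ⟨_, hh, rfl⟩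
    refine ⟨List.mem_append_left _ hh, ?_⟩
    rw [List.idxOf_append_of_mem this]
    exact List.idxOf_lt_length_of_mem this
  · rintro ⟨hh, hp⟩
    rcases List.mem_append.1 hh with hh | hh
    · exact hh
    · exfalso
      have hmem : e' ∈ e :: h2.map Prod.fst := by
        rcases List.mem_cons.1 hh with hh | hh
        · have : e' = e := congrArg Prod.fst hh
          simp [this]
        · exact List.mem_cons_of_mem _ (List.mem_map.2 ⟨_, hh, rfl⟩)
      have : e' ∉ h1.map Prod.fst := fun h => n3 _ h _ hmem rfl
      rw [List.idxOf_append_of_notMem this] at hp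
      omega

lemma bE_sym_inj : ∀ h h' : Fin 7, s((bE h).1, (bE h).2) = s((bE h').1, (bE h').2) → h = h' := by
  have : ∀ h h' : Fin 7, ((bE h).1 = (bE h').1 ∧ (bE h).2 = (bE h').2 ∨
    (bE h).1 = (bE h').2 ∧ (bE h).2 = (bE h').1) → h = h' := by decide
  intro h h' hh
  exact this h h' (Sym2.eq_iff.1 hh)

lemma bE_tau_inj {τ : Fin 6 → V} (hτ : Function.Injective τ) {h h' : Fin 7}
    (e : s(τ (bE h).1, τ (bE h).2) = s(τ (bE h').1, τ (bE h').2)) : h = h' := by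
  apply bE_sym_inj
  apply Sym2.map.injective hτ
  simpa using e

lemma idx_inj {l : List (Sym2 V)} {e e' : Sym2 V} (h : e ∈ l) (h2 : l.idxOf e = l.idxOf e') :
    e = e' := (List.idxOf_inj h).1 h2

lemma col_of {l : List (Sym2 V)} {h : EdgeHistory V 2} (hok : Ok strat h)
    (hm : h.map Prod.fst = l) (hl : ValidEdgeSeq l) :
    Col (fun e => (e, (0 : Fin 2)) ∈ h) (fun e => (e, (1 : Fin 2)) ∈ h) (fun e => l.idxOf e) := by
  have hmem : ∀ e c, (e, c) ∈ h → e ∈ l := by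
    intro e c hh; rw [← hm]; exact List.mem_map.2 ⟨_, hh, rfl⟩
  refine ⟨?_, ?_, ?_, ?_, ?_⟩
  · intro e h0 h1
    have : (e, (0 : Fin 2)) = (e, (1 : Fin 2)) :=
      List.inj_on_of_nodup_map (hm.symm ▸ hl.1) h0 h1 rfl
    simp at this
  · intro x hx
    exact hl.2 _ (hmem _ _ hx) (by simp)
  · intro e e' h1 h2 h3
    exact idx_inj (hmem _ _ h1) h3
  · intro x y hb
    obtain ⟨h1, hs, hp⟩ := past hok hm hl.1 hb
    have hc := strat_one hs
    obtain ⟨⟨x', y', z, he, q1, q2⟩, -⟩ := hc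
    have q1 := (hp _ _).1 q1
    have q2 := (hp _ _).1 q2
    rcases Sym2.eq_iff.1 he with ⟨rfl, rfl⟩ | ⟨rfl, rfl⟩
    · exact ⟨z, q1, q2⟩
    · exact ⟨z, q2, q1⟩
  · intro x y z r1 r2 r3 p1 p2
    obtain ⟨h1, hs, hp⟩ := past hok hm hl.1 r1
    have hc := strat_zero hs
    have hcl : closes h1 s(x, y) := ⟨x, y, z, rfl, (hp _ _).2 ⟨r2, p1⟩, (hp _ _).2 ⟨r3, p2⟩⟩
    have hb : bowc h1 s(x, y) := by
      by_contra hb; exact hc ⟨hcl, hb⟩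
    obtain ⟨τ, hτ, h0, e0, hb⟩ := hb
    exact ⟨τ, hτ, h0, e0, fun h' hh => (hp _ _).1 (hb h' hh)⟩

lemma no_blue {l : List (Sym2 V)} {h : EdgeHistory V 2} (hok : Ok strat h)
    (hm : h.map Prod.fst = l) (hl : ValidEdgeSeq l) {τ : Fin 6 → V} (hτ : Function.Injective τ)
    (hb : ∀ h', (s(τ (bE h').1, τ (bE h').2), (1 : Fin 2)) ∈ h) : False := by
  obtain ⟨h0, -, hmax⟩ := Finset.exists_max_image (Finset.univ : Finset (Fin 7))
    (fun h' => l.idxOf s(τ (bE h').1, τ (bE h').2)) ⟨0, Finset.mem_univ _⟩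
  obtain ⟨h1, hs, hp⟩ := past hok hm hl.1 (hb h0)
  have hc := strat_one hs
  apply hc.2
  refine ⟨τ, hτ, h0, rfl, fun h' hh => (hp _ _).2 ⟨hb h', ?_⟩⟩
  refine lt_of_le_of_ne (hmax h' (Finset.mem_univ _)) fun heq => ?_
  have hmem : s(τ (bE h').1, τ (bE h').2) ∈ l := by
    rw [← hm]; exact List.mem_map.2 ⟨_, hb h', rfl⟩
  exact hh (bE_tau_inj hτ (idx_inj hmem heq))

lemma bowtie_adj (h : Fin 7) : bowtie.Adj (bE h).1 (bE h).2 := by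
  unfold bowtie
  rw [SimpleGraph.fromEdgeSet_adj]
  refine ⟨?_, bE_ne h⟩
  fin_cases h <;> simp [bE]

theorem game_main {l : List (Sym2 V)} (hl : ValidEdgeSeq l)
    (hmono : HasMonoCopy bowtie (runPainter strat l)) :
    ∃ S : Finset V, S.Nonempty ∧ S.card ≤ 27 ∧ Lam (fun x y => s(x, y) ∈ l) S ≤ 0 := by
  obtain ⟨hok, hm⟩ := run_ok (strat : PainterStrategy V 2) l
  obtain ⟨c, f, hf⟩ := hmono
  generalize runPainter strat l = h at hok hm hf
  have hall : ∀ h', (s(f (bE h').1, f (bE h').2), c) ∈ h := by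
    intro h'
    have := hf _ _ (bowtie_adj h')
    unfold colorGraph at this
    rw [SimpleGraph.fromEdgeSet_adj] at this
    exact this.1
  have hc : c = 0 ∨ c = 1 := by fin_cases c <;> simp
  rcases hc with rfl | rfl
  · obtain ⟨S, h1, h2, h3⟩ := det_main (col_of hok hm hl) f f.injective hall
    refine ⟨S, h1, h2, (Lam_mono ?_ S).trans h3⟩
    intro x y hxy
    rw [← hm]
    rcases hxy with hxy | hxy <;> exact List.mem_map.2 ⟨_, hxy, rfl⟩
  · exact (no_blue hok hm hl f.injective hall).elim

end game

section prob

lemma perm_extend {X : Type} [Fintype X] {k : ℕ} (e e' : Fin k ↪ X) :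
    ∃ σ : Equiv.Perm X, ∀ i, σ (e i) = e' i := by
  let q : {x // x ∈ Set.range e} ≃ {x // x ∈ Set.range e'} :=
    (Equiv.ofInjective e e.injective).symm.trans (Equiv.ofInjective e' e'.injective)
  refine ⟨Equiv.extendSubtype q, fun i => ?_⟩
  rw [Equiv.extendSubtype_apply_of_mem q (e i) ⟨i, rfl⟩]
  have : (Equiv.ofInjective e e.injective).symm ⟨e i, ⟨i, rfl⟩⟩ = i := by
    rw [Equiv.symm_apply_eq]; rfl
  simp only [q, Equiv.trans_apply]
  rw [this]; rfl

lemma sym_count {X : Type} [Fintype X] {k N : ℕ} (p : Fin k ↪ Fin N) (e : Fin k ↪ X) :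
    (Finset.univ.filter (fun f : Fin N ↪ X => p.trans f = e)).card * Fintype.card (Fin k ↪ X) =
      Fintype.card (Fin N ↪ X) := by
  have h1 : Fintype.card (Fin N ↪ X) = ∑ e' : Fin k ↪ X,
      (Finset.univ.filter (fun f : Fin N ↪ X => p.trans f = e')).card := by
    rw [← Finset.card_univ]
    exact Finset.card_eq_sum_card_fiberwise (fun _ _ => by simp)
  rw [h1, Finset.sum_const_nat (m := (Finset.univ.filter (fun f : Fin N ↪ X => p.trans f = e)).card),
    Finset.card_univ, mul_comm]
  intro e' _
  obtain ⟨σ, hσ⟩ := perm_extend e' e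
  refine Finset.card_bij' (fun f _ => f.trans σ.toEmbedding) (fun f _ => f.trans σ.symm.toEmbedding)
    ?_ ?_ ?_ ?_
  · intro f hf
    simp only [Finset.mem_filter, Finset.mem_univ, true_and] at hf ⊢
    ext i; rw [← hσ, ← hf]; rfl
  · intro f hf
    simp only [Finset.mem_filter, Finset.mem_univ, true_and] at hf ⊢
    ext i
    have : e' i = σ.symm (e i) := by rw [← hσ]; simp
    rw [this, ← hf]; rfl
  · intro f _; ext i; simp
  · intro f _; ext i; simp

lemma cover_count {X : Type} [Fintype X] (N : ℕ) (E : Finset X) :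
    (Finset.univ.filter (fun f : Fin N ↪ X => ∀ x ∈ E, ∃ i, f i = x)).card *
      (Fintype.card X).descFactorial E.card ≤ N ^ E.card * Fintype.card (Fin N ↪ X) := by
  let e : Fin E.card ↪ X := E.equivFin.symm.toEmbedding.trans (Function.Embedding.subtype _)
  have hsub : Finset.univ.filter (fun f : Fin N ↪ X => ∀ x ∈ E, ∃ i, f i = x) ⊆
      (Finset.univ : Finset (Fin E.card ↪ Fin N)).biUnion
        (fun p => Finset.univ.filter (fun f : Fin N ↪ X => p.trans f = e)) := by
    intro f hf
    simp only [Finset.mem_filter, Finset.mem_univ, true_and, Finset.mem_biUnion] at hf ⊢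
    have : ∀ i, ∃ j, f j = e i := fun i => hf _ (E.equivFin.symm i).2
    choose g hg using this
    refine ⟨⟨g, fun i j hij => e.injective ?_⟩, ?_⟩
    · rw [← hg, ← hg, hij]
    · ext i; exact hg i
  have hc : (Fintype.card X).descFactorial E.card = Fintype.card (Fin E.card ↪ X) := by
    rw [Fintype.card_embedding_eq, Fintype.card_fin]
  have hp : Fintype.card (Fin E.card ↪ Fin N) ≤ N ^ E.card := by
    rw [Fintype.card_embedding_eq, Fintype.card_fin, Fintype.card_fin]
    exact Nat.descFactorial_le_pow _ _
  rw [hc]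
  calc _ ≤ (∑ p : Fin E.card ↪ Fin N,
        (Finset.univ.filter (fun f : Fin N ↪ X => p.trans f = e)).card) *
          Fintype.card (Fin E.card ↪ X) :=
        Nat.mul_le_mul_right _ ((Finset.card_le_card hsub).trans Finset.card_biUnion_le)
    _ = ∑ p : Fin E.card ↪ Fin N, Fintype.card (Fin N ↪ X) := by
        rw [Finset.sum_mul]; exact Finset.sum_congr rfl fun p _ => sym_count p e
    _ = Fintype.card (Fin E.card ↪ Fin N) * Fintype.card (Fin N ↪ X) := by simp
    _ ≤ _ := Nat.mul_le_mul_right _ hp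

def kk (s : ℕ) : ℕ := (43 * s + 25) / 26

lemma dense_set {V : Type} {l : List (Sym2 V)} (hl : ValidEdgeSeq l) {S : Finset V}
    (h : Lam (fun x y => s(x, y) ∈ l) S ≤ 0) :
    ∃ E : Finset (Sym2 V), E ⊆ S.sym2 ∧ E.card = kk S.card ∧ ∀ e ∈ E, e ∈ l := by
  let T := S.sym2.filter (fun e => e ∈ l)
  have hII : II (fun x y => s(x, y) ∈ l) S S ≤ 2 * (T.card : ℤ) := by
    have e1 : II (fun x y => s(x, y) ∈ l) S S =
        (((S ×ˢ S).filter (fun p : V × V => s(p.1, p.2) ∈ l)).card : ℤ) := by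
      unfold II av
      rw [Finset.card_filter, Finset.sum_product]
      push_cast
      refine Finset.sum_congr rfl fun x _ => Finset.sum_congr rfl fun y _ => ?_
      by_cases hh : s(x, y) ∈ l <;> simp [hh]
    rw [e1]
    have : ((S ×ˢ S).filter (fun p : V × V => s(p.1, p.2) ∈ l)).card ≤ 2 * T.card := by
      apply Finset.card_le_mul_card_image_of_maps_to (f := fun p : V × V => s(p.1, p.2))
      · rintro ⟨x, y⟩ hp
        simp only [Finset.mem_filter, Finset.mem_product, T, Finset.mk_mem_sym2_iff] at hp ⊢
        exact hp
      · intro b _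
        induction b using Sym2.ind with
        | _ x y =>
          refine (Finset.card_le_card (t := {(x, y), (y, x)}) ?_).trans Finset.card_le_two
          rintro ⟨x', y'⟩ hp
          simp only [Finset.mem_filter, Sym2.eq_iff] at hp
          rcases hp.2 with ⟨rfl, rfl⟩ | ⟨rfl, rfl⟩ <;> simp
    exact_mod_cast this
  unfold Lam at h
  have hk : kk S.card ≤ T.card := by unfold kk; omega
  obtain ⟨E, hE, hEc⟩ := Finset.exists_subset_card_eq hk
  refine ⟨E, hE.trans (Finset.filter_subset _ _), hEc, fun e he => (Finset.mem_filter.1 (hE he)).2⟩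

structure XX (n : ℕ) where
  val : Sym2 (Fin n)
  prop : ¬ val.IsDiag

lemma XX.ext' {n : ℕ} {x y : XX n} (h : x.1 = y.1) : x = y := by
  cases x; cases y; simp only at h; subst h; rfl

def XXequiv (n : ℕ) : XX n ≃ {e : Sym2 (Fin n) // ¬ e.IsDiag} :=
  ⟨fun x => ⟨x.1, x.2⟩, fun x => ⟨x.1, x.2⟩, fun _ => rfl, fun _ => rfl⟩

noncomputable instance (n : ℕ) : Fintype (XX n) := Fintype.ofEquiv _ (XXequiv n).symm

lemma ncard_valid (n N : ℕ) (P : (Fin N → Sym2 (Fin n)) → Prop) :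
    Set.ncard {f : Fin N → Sym2 (Fin n) | ValidSeqFun f ∧ P f} =
      (Finset.univ.filter (fun f : Fin N ↪ XX n => P (fun i => (f i).1))).card := by
  rw [← Set.ncard_coe_finset,
    ← Set.ncard_image_of_injective (f := fun (f : Fin N ↪ XX n) (i : Fin N) => (f i).1)]
  · congr 1
    ext f
    simp only [Set.mem_ofPred_eq, Finset.coe_filter, Finset.mem_univ, true_and, Set.mem_image]
    constructor
    · rintro ⟨⟨h1, h2⟩, h3⟩
      exact ⟨⟨fun i => ⟨f i, h2 i⟩, fun i j hij => h1 (congrArg XX.val hij)⟩, h3, rfl⟩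
    · rintro ⟨g, hg, rfl⟩
      exact ⟨⟨fun i j hij => g.injective (XX.ext' hij), fun i => (g i).2⟩, hg⟩
  · intro f g hfg
    ext i
    exact XX.ext' (congrFun hfg i)

def cc (s : ℕ) : ℕ := ((s + 1).choose 2).choose (kk s)

lemma count_main (n N : ℕ) :
    ∃ F : ℕ → ℕ, (Finset.univ.filter (fun f : Fin N ↪ XX n =>
        OnlineMonoCopy bowtie strat (fun i => (f i).1))).card ≤ ∑ s ∈ Finset.Icc 1 27, F s ∧
      ∀ s, F s * (n.choose 2).descFactorial (kk s) ≤
        n ^ s * cc s * (N ^ kk s * Fintype.card (Fin N ↪ XX n)) := by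
  let G : Finset (XX n) → Finset (Fin N ↪ XX n) := fun E =>
    Finset.univ.filter (fun f : Fin N ↪ XX n => ∀ x ∈ E, ∃ i, f i = x)
  let Q : Finset (Fin n) → Finset (XX n) := fun S => Finset.univ.filter (fun x => x.1 ∈ S.sym2)
  refine ⟨fun s => ∑ S ∈ Finset.powersetCard s (Finset.univ : Finset (Fin n)),
    ∑ E ∈ Finset.powersetCard (kk s) (Q S), (G E).card, ?_, ?_⟩
  · have hsub : Finset.univ.filter (fun f : Fin N ↪ XX n =>
        OnlineMonoCopy bowtie strat (fun i => (f i).1)) ⊆ (Finset.Icc 1 27).biUnion (fun s =>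
          (Finset.powersetCard s (Finset.univ : Finset (Fin n))).biUnion (fun S =>
            (Finset.powersetCard (kk s) (Q S)).biUnion G)) := by
      intro f hf
      simp only [Finset.mem_filter, Finset.mem_univ, true_and] at hf
      have hval : ValidEdgeSeq (List.ofFn (fun i => (f i).1)) := by
        refine ⟨?_, ?_⟩
        · rw [List.nodup_ofFn]
          exact fun i j hij => f.injective (XX.ext' hij)
        · intro e he
          rw [List.mem_ofFn] at he
          obtain ⟨i, rfl⟩ := he
          exact (f i).2
      obtain ⟨S, h1, h2, h3⟩ := game_main hval hf
      obtain ⟨E, hE1, hE2, hE3⟩ := dense_set hval h3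
      have hnd : ∀ e ∈ E, ¬ e.IsDiag := fun e he => hval.2 _ (hE3 e he)
      let E' : Finset (XX n) := Finset.univ.filter (fun x => x.1 ∈ E)
      have hE'c : E'.card = E.card := by
        refine Finset.card_bij (fun x _ => x.1) ?_ ?_ ?_
        · intro x hx; exact (Finset.mem_filter.1 hx).2
        · intro x _ y _ h; exact XX.ext' h
        · intro e he; exact ⟨⟨e, hnd e he⟩, by simp [E', he], rfl⟩
      simp only [Finset.mem_biUnion, Finset.mem_Icc, Finset.mem_powersetCard]
      refine ⟨S.card, ⟨h1.card_pos, h2⟩, S, ⟨Finset.subset_univ _, rfl⟩, E', ⟨?_, ?_⟩, ?_⟩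
      · intro x hx
        simp only [E', Q, Finset.mem_filter, Finset.mem_univ, true_and] at hx ⊢
        exact hE1 hx
      · rw [hE'c, hE2]
      · simp only [G, Finset.mem_filter, Finset.mem_univ, true_and]
        intro x hx
        simp only [E', Finset.mem_filter, Finset.mem_univ, true_and] at hx
        have := hE3 _ hx
        rw [List.mem_ofFn] at this
        obtain ⟨i, hi⟩ := this
        exact ⟨i, XX.ext' hi⟩
    refine (Finset.card_le_card hsub).trans ?_
    refine Finset.card_biUnion_le.trans (Finset.sum_le_sum fun s _ => ?_)
    refine Finset.card_biUnion_le.trans (Finset.sum_le_sum fun S _ => ?_)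
    exact Finset.card_biUnion_le
  · intro s
    have hX : Fintype.card (XX n) = n.choose 2 := by
      rw [Fintype.card_congr (XXequiv n), Sym2.card_subtype_not_diag, Fintype.card_fin]
    simp only [Finset.sum_mul]
    have hb : ∀ S ∈ Finset.powersetCard s (Finset.univ : Finset (Fin n)),
        ∑ E ∈ Finset.powersetCard (kk s) (Q S), (G E).card * (n.choose 2).descFactorial (kk s) ≤
          cc s * (N ^ kk s * Fintype.card (Fin N ↪ XX n)) := by
      intro S hS
      have hSc := (Finset.mem_powersetCard.1 hS).2
      refine (Finset.sum_le_card_nsmul _ _ (N ^ kk s * Fintype.card (Fin N ↪ XX n)) ?_).trans ?_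
      · intro E hE
        have hEc := (Finset.mem_powersetCard.1 hE).2
        have := cover_count N E
        rw [hX, hEc] at this
        exact this
      · rw [Finset.card_powersetCard, smul_eq_mul]
        refine Nat.mul_le_mul_right _ (Nat.choose_le_choose _ ?_)
        have : (Q S).card ≤ S.sym2.card :=
          Finset.card_le_card_of_injOn (fun x => x.1)
            (fun x hx => (Finset.mem_filter.1 hx).2) (fun x _ y _ h => XX.ext' h)
        rw [Finset.card_sym2, hSc] at this
        exact this
    refine (Finset.sum_le_card_nsmul _ _ _ hb).trans ?_
    rw [Finset.card_powersetCard, Finset.card_univ, Fintype.card_fin, smul_eq_mul, mul_assoc]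
    exact Nat.mul_le_mul_right _ (Nat.choose_le_pow _ _)

lemma desc_lb (n s : ℕ) (hn0 : (20 : ℝ) ≤ n) (hk : kk s ≤ 45) :
    ((n : ℝ) ^ 2 / 4) ^ kk s ≤ ((n.choose 2).descFactorial (kk s) : ℝ) := by
  have e1 : (n.choose 2 + 1 - kk s) ^ kk s ≤ (n.choose 2).descFactorial (kk s) :=
    Nat.pow_sub_le_descFactorial _ _
  have e2 : ((n : ℝ) ^ 2 / 4) ≤ ((n.choose 2 + 1 - kk s : ℕ) : ℝ) := by
    have e3 : n.choose 2 + 1 - 45 ≤ n.choose 2 + 1 - kk s := by omega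
    have e4 : ((n.choose 2 : ℕ) : ℝ) = n * (n - 1) / 2 := Nat.cast_choose_two ℝ n
    have e5 : ((n.choose 2 : ℕ) : ℝ) + 1 - 45 ≤ ((n.choose 2 + 1 - 45 : ℕ) : ℝ) := by
      have : n.choose 2 + 1 ≤ (n.choose 2 + 1 - 45) + 45 := by omega
      have : ((n.choose 2 + 1 : ℕ) : ℝ) ≤ (((n.choose 2 + 1 - 45) + 45 : ℕ) : ℝ) := by
        exact_mod_cast this
      push_cast at this ⊢
      linarith
    have e6 : ((n.choose 2 + 1 - 45 : ℕ) : ℝ) ≤ ((n.choose 2 + 1 - kk s : ℕ) : ℝ) := by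
      exact_mod_cast e3
    rw [e4] at e5
    nlinarith
  calc ((n : ℝ) ^ 2 / 4) ^ kk s ≤ ((n.choose 2 + 1 - kk s : ℕ) : ℝ) ^ kk s :=
        pow_le_pow_left₀ (by positivity) e2 _
    _ ≤ _ := by exact_mod_cast e1

lemma arith_aux (F n N c T D : ℝ) (k s : ℕ) (hF : 0 ≤ F) (hn : 20 ≤ n)
    (hD : (n ^ 2 / 4) ^ k ≤ D) (h2 : F * D ≤ n ^ s * c * (N ^ k * T)) :
    F ≤ c * 4 ^ k * (n ^ s * (N / n ^ 2) ^ k) * T := by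
  have hn0 : n ≠ 0 := by linarith
  have hpos : (0 : ℝ) < (n ^ 2 / 4) ^ k := by positivity
  have h3 : F * (n ^ 2 / 4) ^ k ≤ n ^ s * c * (N ^ k * T) :=
    (mul_le_mul_of_nonneg_left hD hF).trans h2
  rw [← le_div_iff₀ hpos] at h3
  refine h3.trans (le_of_eq ?_)
  rw [div_pow, div_pow]
  field_simp

lemma prob_le (n N : ℕ) (hn : 20 ≤ n) : onlineProb n N (OnlineMonoCopy bowtie strat) ≤
    ∑ s ∈ Finset.Icc 1 27, (cc s : ℝ) * 4 ^ kk s * ((n : ℝ) ^ s * ((N : ℝ) / (n : ℝ) ^ 2) ^ kk s) := by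
  have hn0 : (20 : ℝ) ≤ n := by exact_mod_cast hn
  obtain ⟨F, h1, h2⟩ := count_main n N
  unfold onlineProb
  have ht : Set.ncard {f : Fin N → Sym2 (Fin n) | ValidSeqFun f} = Fintype.card (Fin N ↪ XX n) := by
    have := ncard_valid n N (fun _ => True)
    simpa using this
  rw [ncard_valid, ht]
  by_cases hT : Fintype.card (Fin N ↪ XX n) = 0
  · rw [hT]; simp only [Nat.cast_zero, div_zero]
    refine Finset.sum_nonneg fun s _ => ?_
    refine mul_nonneg (mul_nonneg (Nat.cast_nonneg _) (pow_nonneg (by norm_num) _))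
      (mul_nonneg (pow_nonneg (Nat.cast_nonneg _) _) (pow_nonneg (div_nonneg (Nat.cast_nonneg _)
        (pow_nonneg (Nat.cast_nonneg _) _)) _))
  have hTp : (0 : ℝ) < (Fintype.card (Fin N ↪ XX n) : ℝ) := by
    exact_mod_cast Nat.pos_of_ne_zero hT
  rw [div_le_iff₀ hTp]
  have h1' : (((Finset.univ.filter (fun f : Fin N ↪ XX n =>
        OnlineMonoCopy bowtie strat (fun i => (f i).1))).card : ℕ) : ℝ) ≤
        ∑ s ∈ Finset.Icc 1 27, (F s : ℝ) := by exact_mod_cast h1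
  refine h1'.trans ?_
  rw [Finset.sum_mul]
  refine Finset.sum_le_sum fun s hs => ?_
  rw [Finset.mem_Icc] at hs
  have hk : kk s ≤ 45 := by unfold kk; omega
  have h2' : (F s : ℝ) * ((n.choose 2).descFactorial (kk s) : ℝ) ≤
      (n : ℝ) ^ s * cc s * ((N : ℝ) ^ kk s * (Fintype.card (Fin N ↪ XX n) : ℝ)) := by
    exact_mod_cast h2 s
  exact arith_aux _ _ _ _ _ _ _ _ (Nat.cast_nonneg _) hn0 (desc_lb n s hn0 hk) h2'

lemma term_le (n N s : ℕ) (hn : 1 ≤ n) :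
    (n : ℝ) ^ s * ((N : ℝ) / (n : ℝ) ^ 2) ^ kk s ≤ ((N : ℝ) / (n : ℝ) ^ ((60 : ℝ) / 43)) ^ kk s := by
  have hn1 : (1 : ℝ) ≤ n := by exact_mod_cast hn
  have hn0 : (0 : ℝ) < n := by linarith
  have hk : 43 * s ≤ 26 * kk s := by unfold kk; omega
  have hk' : (43 : ℝ) * s ≤ 26 * kk s := by exact_mod_cast hk
  have e1 : (n : ℝ) ^ 2 = (n : ℝ) ^ ((60 : ℝ) / 43) * (n : ℝ) ^ ((26 : ℝ) / 43) := by
    rw [← Real.rpow_add hn0, ← Real.rpow_natCast]; norm_num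
  have e2 : (n : ℝ) ^ s ≤ ((n : ℝ) ^ ((26 : ℝ) / 43)) ^ kk s := by
    rw [← Real.rpow_natCast, ← Real.rpow_natCast ((n : ℝ) ^ ((26 : ℝ) / 43)), ← Real.rpow_mul hn0.le]
    apply Real.rpow_le_rpow_of_exponent_le hn1
    linarith
  have hp : (0 : ℝ) < (n : ℝ) ^ ((26 : ℝ) / 43) := Real.rpow_pos_of_pos hn0 _
  rw [e1, ← div_div, div_pow _ ((n : ℝ) ^ ((26 : ℝ) / 43)), mul_div_assoc',
    div_le_iff₀ (by positivity), mul_comm]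
  exact mul_le_mul_of_nonneg_left e2 (by positivity)

theorem main :
    ∃ π : (n : ℕ) → PainterStrategy (Fin n) 2,
      ∀ N : ℕ → ℕ,
        (fun n : ℕ => (N n : ℝ)) =o[atTop]
          (fun n : ℕ => (n : ℝ) ^ ((60 : ℝ) / 43)) →
        Tendsto (fun n : ℕ => onlineProb n (N n) (OnlineMonoCopy bowtie (π n)))
          atTop (nhds 0) := by
  refine ⟨fun n => strat, fun N hN => ?_⟩
  have h1 : Tendsto (fun n : ℕ => (N n : ℝ) / (n : ℝ) ^ ((60 : ℝ) / 43)) atTop (nhds 0) :=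
    hN.tendsto_div_nhds_zero
  have h2 : Tendsto (fun n : ℕ => ∑ s ∈ Finset.Icc 1 27, (cc s : ℝ) * 4 ^ kk s *
      ((N n : ℝ) / (n : ℝ) ^ ((60 : ℝ) / 43)) ^ kk s) atTop (nhds 0) := by
    have : (0 : ℝ) = ∑ s ∈ Finset.Icc 1 27, (cc s : ℝ) * 4 ^ kk s * 0 ^ kk s := by
      symm
      apply Finset.sum_eq_zero
      intro s hs
      rw [Finset.mem_Icc] at hs
      have : kk s ≠ 0 := by unfold kk; omega
      rw [zero_pow this, mul_zero]
    rw [this]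
    exact tendsto_finsetSum _ fun s _ => (h1.pow (kk s)).const_mul _
  refine squeeze_zero' ?_ ?_ h2
  · exact Eventually.of_forall fun n => div_nonneg (Nat.cast_nonneg _) (Nat.cast_nonneg _)
  · filter_upwards [eventually_ge_atTop 20] with n hn
    refine (prob_le n (N n) hn).trans (Finset.sum_le_sum fun s _ => ?_)
    exact mul_le_mul_of_nonneg_left (term_le n (N n) s (by omega)) (by positivity)

end prob

end BT

/-- lower bound for the bowtie. There is a sequence of online Painter
strategies with 2 colors such that for every `N : ℕ → ℕ` with `N(n) = o(n^(60/43))`, a.a.s.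
the board after `N(n)` steps contains no monochromatic copy of the bowtie graph. -/
theorem statement10 :
    ∃ π : (n : ℕ) → PainterStrategy (Fin n) 2,
      ∀ N : ℕ → ℕ,
        (fun n : ℕ => (N n : ℝ)) =o[atTop]
          (fun n : ℕ => (n : ℝ) ^ ((60 : ℝ) / 43)) →
        Tendsto (fun n : ℕ => onlineProb n (N n) (OnlineMonoCopy bowtie (π n)))
          atTop (nhds 0) := by
  exact BT.main
end

section
/- Let F be the bowtie graph (two triangles joined by an edge: vertex set {1,...,6}, edges {1,2},{1,3},{2,3},{4,5},{4,6},{5,6},{1,4}). Then Builder has a winning strategy in the deterministic F-avoidance game with 2 colors and density restriction d = 61/36. -/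
open SimpleGraph Filter Asymptotics
open scoped Classical

/-- Colored edges on the infinite board. -/
abbrev CE := Sym2 ℕ × Fin 2

/-- Number of colored edges inside `S`. -/
noncomputable def ew (D : Finset CE) (S : Finset ℕ) : ℕ :=
  (D.filter (fun x => ∀ v ∈ x.1, v ∈ S)).card

/-- A monochromatic bowtie. -/
def Bow (A : Finset CE) : Prop :=
  ∃ (c : Fin 2) (f : Fin 6 → ℕ), Function.Injective f ∧
    (s(f 0, f 1), c) ∈ A ∧ (s(f 0, f 2), c) ∈ A ∧ (s(f 1, f 2), c) ∈ A ∧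
    (s(f 3, f 4), c) ∈ A ∧ (s(f 3, f 5), c) ∈ A ∧ (s(f 4, f 5), c) ∈ A ∧
    (s(f 0, f 3), c) ∈ A

/-- Builder wins from the colored board `A` on the vertex set `ℕ`. -/
inductive Win : Finset CE → Prop
  | done (A : Finset CE) : Bow A → Win A
  | step (A : Finset CE) (u v : ℕ) : u ≠ v → (∀ c, (s(u, v), c) ∉ A) →
      (∀ c S, 36 * ew (insert (s(u, v), c) A) S ≤ 61 * S.card) →
      (∀ c, Win (insert (s(u, v), c) A)) → Win A

lemma density_of_ew {a : ℕ} (h : EdgeHistory (Fin a) 2) (A : Finset CE)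
    (hA : (h.map (fun x => (x.1.map Fin.val, x.2))).toFinset = A)
    (hd : ∀ S, 36 * ew A S ≤ 61 * S.card) :
    DensityLE (boardOf (h.map Prod.fst)) ((61 : ℝ) / 36) := by
  intro S _
  have h1 : edgesWithin (boardOf (h.map Prod.fst)) (↑S : Set (Fin a))
      ≤ ew A (S.map Fin.valEmbedding) := by
    unfold edgesWithin ew
    have hinj : Function.Injective (Sym2.map (Fin.val : Fin a → ℕ)) :=
      Sym2.map.injective Fin.val_injective
    rw [← Set.ncard_image_of_injective _ hinj]
    refine le_trans (Set.ncard_le_ncard (t := ↑((A.filter (fun x => ∀ v ∈ x.1, v ∈ S.map Fin.valEmbedding)).image Prod.fst)) ?_ (Finset.finite_toSet _)) ?_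
    · rintro _ ⟨e, ⟨he, heS⟩, rfl⟩
      simp only [boardOf, SimpleGraph.edgeSet_fromEdgeSet, Set.mem_sdiff, Set.mem_ofPred_eq,
        List.mem_map] at he
      obtain ⟨⟨⟨e', c⟩, hx, rfl⟩, -⟩ := he
      simp only [Finset.coe_image, Set.mem_image, Finset.mem_coe, Finset.mem_filter]
      refine ⟨(Sym2.map Fin.val e', c), ⟨?_, ?_⟩, rfl⟩
      · rw [← hA, List.mem_toFinset, List.mem_map]
        exact ⟨_, hx, rfl⟩
      · intro v hv
        obtain ⟨w, hw, rfl⟩ := Sym2.mem_map.1 hv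
        have := heS w hw
        exact Finset.mem_map.2 ⟨w, by simpa using this, rfl⟩
    · rw [Set.ncard_coe_finset]
      exact Finset.card_image_le
  have h2 := hd (S.map Fin.valEmbedding)
  rw [Finset.card_map] at h2
  have h3 : (36 : ℝ) * (edgesWithin (boardOf (h.map Prod.fst)) (↑S : Set (Fin a)) : ℝ)
      ≤ 61 * S.card := by
    exact_mod_cast le_trans (Nat.mul_le_mul_left 36 h1) h2
  linarith

lemma copy_of_bow {a : ℕ} (h : EdgeHistory (Fin a) 2) (c : Fin 2) (f : Fin 6 → Fin a)
    (hf : Function.Injective f)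
    (h1 : (s(f 0, f 1), c) ∈ h) (h2 : (s(f 0, f 2), c) ∈ h) (h3 : (s(f 1, f 2), c) ∈ h)
    (h4 : (s(f 3, f 4), c) ∈ h) (h5 : (s(f 3, f 5), c) ∈ h) (h6 : (s(f 4, f 5), c) ∈ h)
    (h7 : (s(f 0, f 3), c) ∈ h) : HasMonoCopy bowtie h := by
  refine ⟨c, ⟨f, hf⟩, ?_⟩
  intro u v huv
  simp only [bowtie, SimpleGraph.fromEdgeSet_adj, Set.mem_insert_iff, Set.mem_singleton_iff] at huv
  obtain ⟨huv, hne⟩ := huv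
  simp only [colorGraph, SimpleGraph.fromEdgeSet_adj, Set.mem_ofPred_eq, Function.Embedding.coeFn_mk]
  refine ⟨?_, fun h => hne (hf h)⟩
  have key : s(f u, f v) = Sym2.map f s(u, v) := rfl
  rw [key]
  rcases huv with h | h | h | h | h | h | h <;> rw [h] <;> assumption

lemma transfer {A : Finset CE} (hw : Win A) : ∃ a0 : ℕ, ∀ a ≥ a0,
    ∀ (π : PainterStrategy (Fin a) 2) (h : EdgeHistory (Fin a) 2),
    (h.map (fun x => (x.1.map Fin.val, x.2))).toFinset = A →
    ValidEdgeSeq (h.map Prod.fst) →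
    (∀ i, DensityLE (boardOf ((h.map Prod.fst).take i)) ((61 : ℝ) / 36)) →
    ∃ l, ValidEdgeSeq (h.map Prod.fst ++ l) ∧
      (∀ i, DensityLE (boardOf ((h.map Prod.fst ++ l).take i)) ((61 : ℝ) / 36)) ∧
      HasMonoCopy bowtie (runPainterAux π h l) := by
  induction hw with
  | done A hb =>
    obtain ⟨c, f, hf, h1, h2, h3, h4, h5, h6, h7⟩ := hb
    refine ⟨∑ i, f i + 1, ?_⟩
    intro a ha π h hA hv hd
    refine ⟨[], by simpa using hv, by simpa using hd, ?_⟩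
    have hlt : ∀ i, f i < a := by
      intro i
      have : f i ≤ ∑ i, f i := Finset.single_le_sum (fun _ _ => Nat.zero_le _) (Finset.mem_univ i)
      omega
    have hinj : Function.Injective (Sym2.map (Fin.val : Fin a → ℕ)) :=
      Sym2.map.injective Fin.val_injective
    have key : ∀ i j, (s(f i, f j), c) ∈ A →
        (s((⟨f i, hlt i⟩ : Fin a), (⟨f j, hlt j⟩ : Fin a)), c) ∈ h := by
      intro i j hij
      rw [← hA, List.mem_toFinset, List.mem_map] at hij
      obtain ⟨⟨e, c'⟩, hx, he⟩ := hij
      simp only [Prod.mk.injEq] at he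
      obtain ⟨he, rfl⟩ := he
      have : e = s((⟨f i, hlt i⟩ : Fin a), (⟨f j, hlt j⟩ : Fin a)) := by
        apply hinj
        rw [he]; rfl
      rwa [← this]
    exact copy_of_bow h c (fun i => ⟨f i, hlt i⟩)
      (fun i j hij => hf (by simpa using hij))
      (key _ _ h1) (key _ _ h2) (key _ _ h3) (key _ _ h4) (key _ _ h5) (key _ _ h6) (key _ _ h7)
  | step A u v huv hnew hdens _ ih =>
    choose a0 ha0 using ih
    refine ⟨a0 0 + a0 1 + u + v + 1, ?_⟩
    intro a ha π h hA hv hd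
    have hu : u < a := by omega
    have hv' : v < a := by omega
    set e : Sym2 (Fin a) := s(⟨u, hu⟩, ⟨v, hv'⟩) with he
    have hc : a ≥ a0 (π h e) := by
      generalize π h e = c
      fin_cases c <;> simp <;> omega
    have hA' : ((h ++ [(e, π h e)]).map (fun x => (x.1.map Fin.val, x.2))).toFinset
        = insert (s(u, v), π h e) A := by
      rw [List.map_append, List.toFinset_append, hA]
      ext x
      simp [he, or_comm]
    have hval : ValidEdgeSeq ((h ++ [(e, π h e)]).map Prod.fst) := by
      obtain ⟨hn, hdg⟩ := hv
      constructor
      · rw [List.map_append, List.nodup_append]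
        refine ⟨hn, by simp, ?_⟩
        intro x hx y hy hxy
        simp only [List.map_cons, List.map_nil, List.mem_singleton] at hy
        subst hxy
        subst hy
        obtain ⟨⟨e', c⟩, hx, hxe⟩ := List.mem_map.1 hx
        simp only at hxe
        apply hnew c
        rw [← hA, List.mem_toFinset, List.mem_map]
        exact ⟨_, hx, by rw [hxe, he]; rfl⟩
      · intro x hx
        rw [List.map_append, List.mem_append] at hx
        rcases hx with hx | hx
        · exact hdg x hx
        · simp only [List.map_cons, List.map_nil, List.mem_singleton] at hx
          rw [hx, he]
          simpa using huv
    have hden : ∀ i, DensityLE (boardOf (((h ++ [(e, π h e)]).map Prod.fst).take i)) ((61 : ℝ) / 36) := by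
      intro i
      by_cases hi : i ≤ (h.map Prod.fst).length
      · rw [List.map_append, List.take_append_of_le_length hi]
        exact hd i
      · rw [List.take_of_length_le]
        · exact density_of_ew _ _ hA' (hdens _)
        · simp at hi ⊢; omega
    obtain ⟨l, hl1, hl2, hl3⟩ := ha0 (π h e) a hc π _ hA' hval hden
    refine ⟨e :: l, ?_, ?_, hl3⟩
    · simpa using hl1
    · simpa using hl2

lemma builder_of_win (hw : Win ∅) : BuilderWinsDensity bowtie 2 ((61 : ℝ) / 36) := by
  obtain ⟨a, ha⟩ := transfer hw
  refine ⟨a, fun π => ?_⟩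
  obtain ⟨l, h1, h2, h3⟩ := ha a le_rfl π [] (by simp) ⟨by simp, by simp⟩ (by
    intro i S _
    simp [edgesWithin, boardOf])
  exact ⟨l, by simpa using h1, by simpa using h2, h3⟩

/-- Safe state for Painter: colored board `A`, used vertices `X`. -/
def Ok (A : Finset CE) (X : Finset ℕ) : Prop :=
  ¬ Win A ∧ (∀ S, 36 * ew A S ≤ 61 * S.card) ∧ ∀ x ∈ A, ∀ v ∈ x.1, v ∈ X

/-- Extension of states by edges on fresh vertices. -/
def Le (A : Finset CE) (X : Finset ℕ) (A' : Finset CE) (X' : Finset ℕ) : Prop :=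
  A ⊆ A' ∧ X ⊆ X' ∧ ∀ x ∈ A', x ∉ A → ∀ v ∈ x.1, v ∉ X

lemma Le.refl (A : Finset CE) (X : Finset ℕ) : Le A X A X :=
  ⟨subset_rfl, subset_rfl, fun _ h h' => absurd h h'⟩

lemma Le.trans {A X A' X' A'' X''} (h : Le A X A' X') (h' : Le A' X' A'' X'') :
    Le A X A'' X'' := by
  refine ⟨h.1.trans h'.1, h.2.1.trans h'.2.1, ?_⟩
  intro x hx hxA v hv hvX
  by_cases hx' : x ∈ A'
  · exact h.2.2 x hx' hxA v hv hvX
  · exact h'.2.2 x hx hx' v hv (h.2.1 hvX)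

/-- Types of components. -/
abbrev Ty := Finset ℕ → Finset CE → Prop

/-- `(A', X')` has a component of type `T` away from `X`. -/
def Has (X : Finset ℕ) (A' : Finset CE) (X' : Finset ℕ) (T : Ty) : Prop :=
  ∃ C D, C ⊆ X' ∧ Disjoint C X ∧ D ⊆ A' ∧ (∀ x ∈ D, ∀ v ∈ x.1, v ∈ C) ∧
    (∀ x ∈ A', x ∉ D → ∀ v ∈ x.1, v ∉ C) ∧ T C D

/-- Components of type `T` are always available after `(A, X)`. -/
def Av (A : Finset CE) (X : Finset ℕ) (T : Ty) : Prop :=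
  ∀ A' X', Le A X A' X' → Ok A' X' → ∃ A'' X'', Le A' X' A'' X'' ∧ Ok A'' X'' ∧ Has X' A'' X'' T

lemma Av.le {A X A' X' T} (h : Av A X T) (hl : Le A X A' X') : Av A' X' T :=
  fun _ _ h1 h2 => h _ _ (hl.trans h1) h2

lemma Av.mono {A X} {T T' : Ty} (h : Av A X T)
    (hT : ∀ C D, (∀ x ∈ D, ∀ v ∈ x.1, v ∈ C) → T C D → T' C D) : Av A X T' := by
  intro A' X' h1 h2
  obtain ⟨A'', X'', h3, h4, C, D, a, b, c, d, e, f⟩ := h A' X' h1 h2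
  exact ⟨A'', X'', h3, h4, C, D, a, b, c, d, e, hT C D d f⟩

lemma Av.pigeon {A X} {T : Fin 2 → Ty} (ho : Ok A X) (h : Av A X (fun C D => ∃ c, T c C D)) :
    ∃ A' X', Le A X A' X' ∧ Ok A' X' ∧ ∃ c, Av A' X' (T c) := by
  by_cases h0 : Av A X (T 0)
  · exact ⟨A, X, Le.refl _ _, ho, 0, h0⟩
  · unfold Av at h0
    push Not at h0
    obtain ⟨A', X', hl, ho', hno⟩ := h0
    refine ⟨A', X', hl, ho', 1, ?_⟩
    intro A1 X1 hl1 ho1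
    obtain ⟨A2, X2, hl2, ho2, C, D, a, b, c, d, e, t, ht⟩ := h A1 X1 (hl.trans hl1) ho1
    refine ⟨A2, X2, hl2, ho2, C, D, a, b, c, d, e, ?_⟩
    fin_cases t
    · exact absurd ⟨C, D, a, b.mono_right hl1.2.1, c, d, e, ht⟩ (hno A2 X2 (hl1.trans hl2) ho2)
    · exact ht

lemma ew_split (D B : Finset CE) (C S : Finset ℕ) (hD : ∀ x ∈ D, ∀ v ∈ x.1, v ∈ C)
    (hB : ∀ x ∈ B, ∀ v ∈ x.1, v ∉ C) :
    ew (D ∪ B) S ≤ ew D (S ∩ C) + ew B (S \ C) := by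
  unfold ew
  rw [Finset.filter_union]
  refine (Finset.card_union_le _ _).trans (Nat.add_le_add ?_ ?_)
  · apply Finset.card_le_card
    intro x hx
    rw [Finset.mem_filter] at hx ⊢
    exact ⟨hx.1, fun v hv => Finset.mem_inter.2 ⟨hx.2 v hv, hD x hx.1 v hv⟩⟩
  · apply Finset.card_le_card
    intro x hx
    rw [Finset.mem_filter] at hx ⊢
    exact ⟨hx.1, fun v hv => Finset.mem_sdiff.2 ⟨hx.2 v hv, hB x hx.1 v hv⟩⟩

lemma ew_mono {D D' : Finset CE} (h : D ⊆ D') (S : Finset ℕ) : ew D S ≤ ew D' S :=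
  Finset.card_le_card (Finset.filter_subset_filter _ h)

lemma ew_insert (D : Finset CE) (u v : ℕ) (c : Fin 2) (S : Finset ℕ) :
    ew (insert (s(u, v), c) D) S ≤ ew D S + (if u ∈ S ∧ v ∈ S then 1 else 0) := by
  unfold ew
  rw [Finset.filter_insert]
  simp only [Sym2.mem_iff, forall_eq_or_imp, forall_eq]
  split_ifs
  · exact Finset.card_insert_le _ _
  · simp

/-- Presenting an edge inside a component. -/
lemma Av.edge {A X} {T : Ty} {T' : Fin 2 → Ty} (ho : Ok A X) (h : Av A X T)
    (hT : ∀ C D, (∀ x ∈ D, ∀ v ∈ x.1, v ∈ C) → T C D → ∃ u ∈ C, ∃ v ∈ C, u ≠ v ∧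
      (∀ c, (s(u, v), c) ∉ D) ∧ (∀ c S, 36 * ew (insert (s(u, v), c) D) S ≤ 61 * S.card) ∧
      ∀ c, T' c C (insert (s(u, v), c) D)) :
    ∃ A' X', Le A X A' X' ∧ Ok A' X' ∧ ∃ c, Av A' X' (T' c) := by
  apply Av.pigeon ho
  intro A1 X1 hl1 ho1
  obtain ⟨A2, X2, hl2, ho2, C, D, hCX, hCd, hDA, hDC, hAC, ht⟩ := h A1 X1 hl1 ho1
  obtain ⟨u, hu, v, hv, huv, hnew, hden, hT'⟩ := hT C D hDC ht
  have hnewA : ∀ c, (s(u, v), c) ∉ A2 := by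
    intro c hc
    exact hAC _ hc (hnew c) u (by simp) hu
  have hgood : ∀ c S, 36 * ew (insert (s(u, v), c) A2) S ≤ 61 * S.card := by
    intro c S
    have hDC' : ∀ x ∈ insert (s(u, v), c) D, ∀ w ∈ x.1, w ∈ C := by
      intro x hx w hw
      rcases Finset.mem_insert.1 hx with rfl | hx
      · simp only [Sym2.mem_iff] at hw
        rcases hw with rfl | rfl <;> assumption
      · exact hDC x hx w hw
    have h1 := ew_split (insert (s(u, v), c) D) (A2 \ D) C S hDC' (by
      intro x hx
      rw [Finset.mem_sdiff] at hx
      exact hAC x hx.1 hx.2)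
    have h2 : insert (s(u, v), c) D ∪ (A2 \ D) = insert (s(u, v), c) A2 := by
      rw [Finset.insert_union, Finset.union_sdiff_of_subset hDA]
    rw [h2] at h1
    have h3 := hden c (S ∩ C)
    have h4 := ho2.2.1 (S \ C)
    have h5 := ew_mono (Finset.sdiff_subset : A2 \ D ⊆ A2) (S \ C)
    have h6 := Finset.card_inter_add_card_sdiff S C
    omega
  have : ∃ c, ¬ Win (insert (s(u, v), c) A2) := by
    by_contra hcon
    push Not at hcon
    exact ho2.1 (Win.step A2 u v huv hnewA hgood hcon)
  obtain ⟨c, hc⟩ := this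
  refine ⟨insert (s(u, v), c) A2, X2, ⟨hl2.1.trans (Finset.subset_insert _ _), hl2.2.1, ?_⟩,
    ⟨hc, hgood c, ?_⟩, C, insert (s(u, v), c) D, hCX, hCd, Finset.insert_subset_insert _ hDA,
    ?_, ?_, c, hT' c⟩
  · intro x hx hxA w hw
    rcases Finset.mem_insert.1 hx with rfl | hx
    · simp only [Sym2.mem_iff] at hw
      rcases hw with rfl | rfl
      · exact Finset.disjoint_left.1 hCd hu
      · exact Finset.disjoint_left.1 hCd hv
    · exact hl2.2.2 x hx hxA w hw
  · intro x hx w hw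
    rcases Finset.mem_insert.1 hx with rfl | hx
    · simp only [Sym2.mem_iff] at hw
      rcases hw with rfl | rfl
      · exact hCX hu
      · exact hCX hv
    · exact ho2.2.2 x hx w hw
  · intro x hx w hw
    rcases Finset.mem_insert.1 hx with rfl | hx
    · simp only [Sym2.mem_iff] at hw
      rcases hw with rfl | rfl <;> assumption
    · exact hDC x hx w hw
  · intro x hx hxD w hw
    rw [Finset.mem_insert, not_or] at hxD
    rcases Finset.mem_insert.1 hx with rfl | hx
    · exact absurd rfl hxD.1
    · exact hAC x hx hxD.2 w hw

/-- Two disjoint components. -/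
def Pair (T1 T2 : Ty) : Ty := fun C D => ∃ C1 C2 D1 D2, C = C1 ∪ C2 ∧ D = D1 ∪ D2 ∧
  Disjoint C1 C2 ∧ (∀ x ∈ D1, ∀ v ∈ x.1, v ∈ C1) ∧ (∀ x ∈ D2, ∀ v ∈ x.1, v ∈ C2) ∧
  T1 C1 D1 ∧ T2 C2 D2

lemma Av.pair {A X} {T1 T2 : Ty} (h1 : Av A X T1) (h2 : Av A X T2) : Av A X (Pair T1 T2) := by
  intro A0 X0 hl0 ho0
  obtain ⟨A1, X1, hl1, ho1, C1, D1, a1, b1, c1, d1, e1, f1⟩ := h1 A0 X0 hl0 ho0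
  obtain ⟨A2, X2, hl2, ho2, C2, D2, a2, b2, c2, d2, e2, f2⟩ := h2 A1 X1 (hl0.trans hl1) ho1
  refine ⟨A2, X2, hl1.trans hl2, ho2, C1 ∪ C2, D1 ∪ D2, ?_, ?_, ?_, ?_, ?_,
    C1, C2, D1, D2, rfl, rfl, ?_, d1, d2, f1, f2⟩
  · exact Finset.union_subset (a1.trans hl2.2.1) a2
  · exact Finset.disjoint_union_left.2 ⟨b1, b2.mono_right hl1.2.1⟩
  · exact Finset.union_subset (c1.trans hl2.1) c2
  · intro x hx v hv
    rcases Finset.mem_union.1 hx with hx | hx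
    · exact Finset.mem_union_left _ (d1 x hx v hv)
    · exact Finset.mem_union_right _ (d2 x hx v hv)
  · intro x hx hxD v hv hvC
    rw [Finset.mem_union, not_or] at hxD
    rcases Finset.mem_union.1 hvC with hvC | hvC
    · by_cases hx1 : x ∈ A1
      · exact e1 x hx1 hxD.1 v hv hvC
      · exact hl2.2.2 x hx hx1 v hv (a1 hvC)
    · exact e2 x hx hxD.2 v hv hvC
  · exact (b2.mono_right a1).symm

lemma Av.vertex (A : Finset CE) (X : Finset ℕ) : Av A X (fun C D => ∃ v, C = {v} ∧ D = ∅) := by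
  intro A1 X1 _ ho
  obtain ⟨v, hv⟩ := Infinite.exists_notMem_finset X1
  refine ⟨A1, insert v X1, ⟨subset_rfl, Finset.subset_insert _ _, fun _ h h' => absurd h h'⟩,
    ⟨ho.1, ho.2.1, fun x hx w hw => Finset.mem_insert_of_mem (ho.2.2 x hx w hw)⟩,
    {v}, ∅, by simp, by simpa using hv, by simp, by simp, ?_, v, rfl, rfl⟩
  intro x hx _ w hw hwv
  rw [Finset.mem_singleton] at hwv
  subst hwv
  exact hv (ho.2.2 x hx w hw)

lemma Av.not_bow {A X} (ho : Ok A X) (h : Av A X (fun _ D => Bow D)) : False := by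
  obtain ⟨A', X', _, ho', C, D, _, _, hD, _, _, c, f, hf, h1, h2, h3, h4, h5, h6, h7⟩ :=
    h A X (Le.refl _ _) ho
  exact ho'.1 (Win.done _ ⟨c, f, hf, hD h1, hD h2, hD h3, hD h4, hD h5, hD h6, hD h7⟩)

/-- Splitting the edge count over a joined pair. -/
lemma ew_join {C1 C2 : Finset ℕ} {D1 D2 : Finset CE} (hC : Disjoint C1 C2)
    (h1 : ∀ x ∈ D1, ∀ v ∈ x.1, v ∈ C1) (h2 : ∀ x ∈ D2, ∀ v ∈ x.1, v ∈ C2)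
    (u v : ℕ) (c : Fin 2) (S : Finset ℕ) :
    ew (insert (s(u, v), c) (D1 ∪ D2)) S ≤
      ew D1 (S ∩ C1) + ew D2 (S \ C1) + (if u ∈ S ∧ v ∈ S then 1 else 0) := by
  refine (ew_insert _ u v c S).trans (Nat.add_le_add_right (ew_split D1 D2 C1 S h1 ?_) _)
  intro x hx v hv hvC
  exact Finset.disjoint_left.1 hC hvC (h2 x hx v hv)

lemma ew_empty (D : Finset CE) : ew D ∅ = 0 := by
  unfold ew
  rw [Finset.card_eq_zero, Finset.filter_eq_empty_iff]
  rintro ⟨e, c⟩ _ h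
  induction e using Sym2.ind with
  | _ a b => exact absurd (h a (by simp)) (by simp)

lemma join_cases {C1 C2 : Finset ℕ} {D1 D2 : Finset CE} (hC : Disjoint C1 C2)
    (h1 : ∀ x ∈ D1, ∀ v ∈ x.1, v ∈ C1) (h2 : ∀ x ∈ D2, ∀ v ∈ x.1, v ∈ C2)
    {u v : ℕ} (hu : u ∈ C1) (hv : v ∈ C2) (c : Fin 2) (S : Finset ℕ) (hS : S.Nonempty) :
    S.card = (S ∩ C1).card + (S \ C1).card ∧
    (((S ∩ C1).Nonempty ∧ (S \ C1).Nonempty ∧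
        ew (insert (s(u, v), c) (D1 ∪ D2)) S ≤
          ew D1 (S ∩ C1) + ew D2 (S \ C1) + (if u ∈ S ∧ v ∈ S then 1 else 0)) ∨
      ((S ∩ C1).card = 0 ∧ u ∉ S ∧ (S \ C1).Nonempty ∧
        ew (insert (s(u, v), c) (D1 ∪ D2)) S ≤ ew D2 (S \ C1)) ∨
      ((S \ C1).card = 0 ∧ v ∉ S ∧ (S ∩ C1).Nonempty ∧
        ew (insert (s(u, v), c) (D1 ∪ D2)) S ≤ ew D1 (S ∩ C1))) := by
  have hj := ew_join hC h1 h2 u v c S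
  have hcard := Finset.card_inter_add_card_sdiff S C1
  refine ⟨hcard.symm, ?_⟩
  rcases Finset.eq_empty_or_nonempty (S ∩ C1) with hP | hP
  · right; left
    have hu' : u ∉ S := fun h => by
      have : u ∈ S ∩ C1 := Finset.mem_inter.2 ⟨h, hu⟩
      rw [hP] at this; simp at this
    have hQ : (S \ C1).Nonempty := by
      rw [← Finset.card_pos] at hS ⊢
      rw [hP, Finset.card_empty] at hcard
      omega
    refine ⟨by rw [hP]; simp, hu', hQ, ?_⟩
    rw [hP, ew_empty] at hj
    simpa [hu'] using hj
  · rcases Finset.eq_empty_or_nonempty (S \ C1) with hQ | hQ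
    · right; right
      have hv' : v ∉ S := fun h => by
        have : v ∈ S \ C1 := Finset.mem_sdiff.2 ⟨h, fun h' => Finset.disjoint_left.1 hC h' hv⟩
        rw [hQ] at this; simp at this
      refine ⟨by rw [hQ]; simp, hv', hP, ?_⟩
      rw [hQ, ew_empty] at hj
      simpa [hv'] using hj
    · exact Or.inl ⟨hP, hQ, hj⟩

lemma cross_new {C1 C2 : Finset ℕ} {D1 D2 : Finset CE} (hC : Disjoint C1 C2)
    (h1 : ∀ x ∈ D1, ∀ v ∈ x.1, v ∈ C1) (h2 : ∀ x ∈ D2, ∀ v ∈ x.1, v ∈ C2)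
    {u v : ℕ} (hu : u ∈ C1) (hv : v ∈ C2) (c : Fin 2) : (s(u, v), c) ∉ D1 ∪ D2 := by
  intro h
  rcases Finset.mem_union.1 h with h | h
  · exact Finset.disjoint_left.1 hC (h1 _ h v (by simp)) hv
  · exact Finset.disjoint_left.1 hC hu (h2 _ h u (by simp))

/-- A tree component with a monochromatic path on `n` vertices. -/
def PT (c : Fin 2) (n : ℕ) : Ty := fun C D => ∃ l : List ℕ, l.length = n ∧ l.Nodup ∧
  (∀ v ∈ l, v ∈ C) ∧ l.IsChain (fun a b => (s(a, b), c) ∈ D) ∧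
  ∀ S : Finset ℕ, S.Nonempty → ew D S + 1 ≤ S.card

lemma path_step {A X} (ho : Ok A X) {i j : ℕ} (h0 : Av A X (PT 0 (i + 1)))
    (h1 : Av A X (PT 1 (j + 1))) :
    ∃ A' X', Le A X A' X' ∧ Ok A' X' ∧ ∃ c, Av A' X' (PT c (if c = 0 then i + 2 else j + 2)) := by
  refine Av.edge ho (h0.pair h1) ?_
  rintro C D - ⟨C1, C2, D1, D2, rfl, rfl, hC, hD1, hD2, ⟨l1, hl1, hn1, hm1, hch1, hf1⟩,
    ⟨l2, hl2, hn2, hm2, hch2, hf2⟩⟩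
  obtain ⟨u, l1, rfl⟩ : ∃ u l, l1 = u :: l := by
    cases l1 with
    | nil => simp at hl1
    | cons u l => exact ⟨u, l, rfl⟩
  obtain ⟨v, l2, rfl⟩ : ∃ u l, l2 = u :: l := by
    cases l2 with
    | nil => simp at hl2
    | cons u l => exact ⟨u, l, rfl⟩
  have hu : u ∈ C1 := hm1 u (by simp)
  have hv : v ∈ C2 := hm2 v (by simp)
  have hforest : ∀ (c : Fin 2) (S : Finset ℕ), S.Nonempty →
      ew (insert (s(u, v), c) (D1 ∪ D2)) S + 1 ≤ S.card := by
    intro c S hS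
    obtain ⟨hc, h | h | h⟩ := join_cases hC hD1 hD2 hu hv c S hS
    · obtain ⟨hP, hQ, h⟩ := h
      have := hf1 _ hP
      have := hf2 _ hQ
      split_ifs at h <;> omega
    · obtain ⟨hP, -, hQ, h⟩ := h
      have := hf2 _ hQ
      omega
    · obtain ⟨hP, -, hQ, h⟩ := h
      have := hf1 _ hQ
      omega
  refine ⟨u, Finset.mem_union_left _ hu, v, Finset.mem_union_right _ hv, ?_,
    cross_new hC hD1 hD2 hu hv, ?_, ?_⟩
  · rintro rfl
    exact Finset.disjoint_left.1 hC hu hv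
  · intro c S
    rcases Finset.eq_empty_or_nonempty S with rfl | hS
    · simp [ew_empty]
    · have := hforest c S hS
      omega
  · intro c
    fin_cases c
    · refine ⟨v :: u :: l1, by simpa using hl1, ?_, ?_, ?_, hforest 0⟩
      · rw [List.nodup_cons]
        exact ⟨fun h => Finset.disjoint_left.1 hC (hm1 v h) hv, hn1⟩
      · intro w hw
        rcases List.mem_cons.1 hw with rfl | hw
        · exact Finset.mem_union_right _ hv
        · exact Finset.mem_union_left _ (hm1 w hw)
      · rw [List.isChain_cons_cons]
        refine ⟨by simp [Sym2.eq_swap], hch1.imp ?_⟩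
        intro a b hab
        exact Finset.mem_insert_of_mem (Finset.mem_union_left _ hab)
    · refine ⟨u :: v :: l2, by simpa using hl2, ?_, ?_, ?_, hforest 1⟩
      · rw [List.nodup_cons]
        exact ⟨fun h => Finset.disjoint_left.1 hC hu (hm2 u h), hn2⟩
      · intro w hw
        rcases List.mem_cons.1 hw with rfl | hw
        · exact Finset.mem_union_left _ hu
        · exact Finset.mem_union_right _ (hm2 w hw)
      · rw [List.isChain_cons_cons]
        refine ⟨by simp, hch2.imp ?_⟩
        intro a b hab
        exact Finset.mem_insert_of_mem (Finset.mem_union_right _ hab)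

lemma PT.single (A : Finset CE) (X : Finset ℕ) (c : Fin 2) : Av A X (PT c 1) := by
  refine (Av.vertex A X).mono ?_
  rintro C D - ⟨v, rfl, rfl⟩
  refine ⟨[v], rfl, by simp, by simp, by simp, ?_⟩
  intro S hS
  have := Finset.card_pos.2 hS
  simp [ew]; omega

lemma path_iter {A X} (ho : Ok A X) (k : ℕ) : ∃ A' X', Le A X A' X' ∧ Ok A' X' ∧
    ∃ i j, i + j = k ∧ Av A' X' (PT 0 (i + 1)) ∧ Av A' X' (PT 1 (j + 1)) := by
  induction k with
  | zero => exact ⟨A, X, Le.refl _ _, ho, 0, 0, rfl, PT.single _ _ _, PT.single _ _ _⟩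
  | succ k ih =>
    obtain ⟨A1, X1, hl1, ho1, i, j, hij, h0, h1⟩ := ih
    obtain ⟨A2, X2, hl2, ho2, c, hc⟩ := path_step ho1 h0 h1
    refine ⟨A2, X2, hl1.trans hl2, ho2, ?_⟩
    fin_cases c
    · exact ⟨i + 1, j, by omega, hc, h1.le hl2⟩
    · exact ⟨i, j + 1, by omega, h0.le hl2, hc⟩

lemma PT.take {c n} {C : Finset ℕ} {D : Finset CE} (hn : 7 ≤ n) (h : PT c n C D) :
    PT c 7 C D := by
  obtain ⟨l, h1, h2, h3, h4, h5⟩ := h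
  exact ⟨l.take 7, by simp; omega, h2.sublist (List.take_sublist _ _),
    fun v hv => h3 v (List.mem_of_mem_take hv), h4.take 7, h5⟩

lemma path_seven {A X} (ho : Ok A X) : ∃ A' X', Le A X A' X' ∧ Ok A' X' ∧
    ∃ c, Av A' X' (PT c 7) := by
  obtain ⟨A1, X1, hl1, ho1, i, j, hij, h0, h1⟩ := path_iter ho 12
  refine ⟨A1, X1, hl1, ho1, ?_⟩
  by_cases hi : 6 ≤ i
  · exact ⟨0, h0.mono fun C D _ h => h.take (by omega)⟩
  · exact ⟨1, h1.mono fun C D _ h => h.take (by omega)⟩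

/-- Colored edges on the seven core vertices; `true` is the color of the path. -/
abbrev CL := List (Fin 7 × Fin 7 × Bool)

def col (c : Fin 2) (y : Bool) : Fin 2 := if y then c else c + 1

def cnt (E : CL) (p : Fin 7 → Bool) : ℕ := E.countP (fun t => p t.1 && p t.2.1)

def allB (g : Bool → Bool) : Bool := g true && g false

lemma allB_spec {g : Bool → Bool} (h : allB g = true) (b : Bool) : g b = true := by
  unfold allB at h
  rw [Bool.and_eq_true] at h
  cases b
  · exact h.2
  · exact h.1

/-- Density check over all subsets of the core. -/
def bdB (E : CL) : Bool :=
  allB fun b0 => allB fun b1 => allB fun b2 => allB fun b3 => allB fun b4 => allB fun b5 =>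
  allB fun b6 => (!(b0 || b1 || b2 || b3 || b4 || b5 || b6)) ||
    Nat.ble (36 * cnt E ![b0, b1, b2, b3, b4, b5, b6] + 42)
      (61 * (b0.toNat + b1.toNat + b2.toNat + b3.toNat + b4.toNat + b5.toNat + b6.toNat))

lemma bdB_spec {E : CL} (h : bdB E = true) (p : Fin 7 → Bool) (hp : ∃ i, p i = true) :
    36 * cnt E p + 42 ≤ 61 * ∑ i, (p i).toNat := by
  have h' := allB_spec (allB_spec (allB_spec (allB_spec (allB_spec (allB_spec (allB_spec h
    (p 0)) (p 1)) (p 2)) (p 3)) (p 4)) (p 5)) (p 6)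
  have hpe : ![p 0, p 1, p 2, p 3, p 4, p 5, p 6] = p := by
    funext i; fin_cases i <;> rfl
  rw [hpe] at h'
  have hs : ∑ i, (p i).toNat = (p 0).toNat + (p 1).toNat + (p 2).toNat + (p 3).toNat
      + (p 4).toNat + (p 5).toNat + (p 6).toNat := by
    simp [Fin.sum_univ_succ]; ring_nf
  rw [hs]
  rw [Bool.or_eq_true] at h'
  rcases h' with h' | h'
  · exfalso
    simp only [Bool.not_eq_true', Bool.or_eq_false_iff] at h'
    obtain ⟨i, hi⟩ := hp
    fin_cases i <;> simp_all
  · exact Nat.le_of_ble_eq_true h'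

/-- Component whose core `f` carries exactly the colored edges `E`. -/
def QT (c : Fin 2) (E : CL) : Ty := fun C D => ∃ f : Fin 7 → ℕ, Function.Injective f ∧
  (∀ i, f i ∈ C) ∧ (∀ t ∈ E, (s(f t.1, f t.2.1), col c t.2.2) ∈ D) ∧
  (∀ S : Finset ℕ, ew D S ≤ (S \ Finset.univ.image f).card + cnt E (fun i => decide (f i ∈ S))) ∧
  (∀ S : Finset ℕ, S.Nonempty → (∀ i, f i ∉ S) → ew D S + 1 ≤ S.card)

lemma core_bound {E : CL} (hE : bdB E = true) {D : Finset CE} {f : Fin 7 → ℕ}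
    (hf : Function.Injective f)
    (h1 : ∀ S : Finset ℕ, ew D S ≤ (S \ Finset.univ.image f).card
      + cnt E (fun i => decide (f i ∈ S)))
    (h2 : ∀ S : Finset ℕ, S.Nonempty → (∀ i, f i ∉ S) → ew D S + 1 ≤ S.card)
    (S : Finset ℕ) (hS : S.Nonempty) : 36 * ew D S + 42 ≤ 61 * S.card := by
  by_cases hK : ∀ i, f i ∉ S
  · have := h2 S hS hK
    omega
  · push Not at hK
    obtain ⟨i, hi⟩ := hK
    have h3 := bdB_spec hE (fun i => decide (f i ∈ S)) ⟨i, by simpa using hi⟩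
    have h4 : ∑ i, (decide (f i ∈ S)).toNat = (S ∩ Finset.univ.image f).card := by
      have : S ∩ Finset.univ.image f = (Finset.univ.filter (fun i => f i ∈ S)).image f := by
        ext x
        simp only [Finset.mem_inter, Finset.mem_image, Finset.mem_univ, true_and,
          Finset.mem_filter]
        constructor
        · rintro ⟨hx, i, rfl⟩
          exact ⟨i, hx, rfl⟩
        · rintro ⟨i, hx, rfl⟩
          exact ⟨hx, i, rfl⟩
      rw [this, Finset.card_image_of_injective _ hf, Finset.card_filter]
      refine Finset.sum_congr rfl fun i _ => ?_
      by_cases h : f i ∈ S <;> simp [h]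
    have h5 := h1 S
    have h6 := Finset.card_inter_add_card_sdiff S (Finset.univ.image f)
    rw [h4] at h3
    omega

/-- A component with a monochromatic triangle and enough slack. -/
def TriAt (x : Fin 2) (D : Finset CE) (r a b : ℕ) : Prop :=
  r ≠ a ∧ r ≠ b ∧ a ≠ b ∧ (s(r, a), x) ∈ D ∧ (s(r, b), x) ∈ D ∧ (s(a, b), x) ∈ D

def TT (x : Fin 2) : Ty := fun _ D => ∃ r a b, TriAt x D r a b ∧
  ∀ S : Finset ℕ, S.Nonempty → 36 * ew D S + 42 ≤ 61 * S.card

inductive Tr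
  | leaf (a b d : Fin 7) (y : Bool)
  | node (a b : Fin 7) (t1 t2 : Tr)

def hasE (E : CL) (a b : Fin 7) (y : Bool) : Bool :=
  E.any (fun t => t.2.2 == y && ((t.1 == a && t.2.1 == b) || (t.1 == b && t.2.1 == a)))

def chk : CL → Tr → Bool
  | E, .leaf a b d y => (a != b && a != d && b != d) && hasE E a b y && hasE E a d y
      && hasE E b d y && bdB E
  | E, .node a b t1 t2 => a != b && (cnt E (fun i => i == a || i == b) == 0) &&
      bdB ((a, b, true) :: E) && bdB ((a, b, false) :: E) &&
      chk ((a, b, true) :: E) t1 && chk ((a, b, false) :: E) t2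

lemma hasE_spec {E : CL} {a b : Fin 7} {y : Bool} (h : hasE E a b y = true) {c : Fin 2}
    {D : Finset CE} {f : Fin 7 → ℕ} (hE : ∀ t ∈ E, (s(f t.1, f t.2.1), col c t.2.2) ∈ D) :
    (s(f a, f b), col c y) ∈ D := by
  unfold hasE at h
  rw [List.any_eq_true] at h
  obtain ⟨⟨u, v, z⟩, ht, h⟩ := h
  have h' := hE _ ht
  simp only [Bool.and_eq_true, Bool.or_eq_true, beq_iff_eq] at h
  obtain ⟨rfl, ⟨rfl, rfl⟩ | ⟨rfl, rfl⟩⟩ := h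
  · exact h'
  · rw [Sym2.eq_swap]; exact h'

lemma one_le_ew {D : Finset CE} {u v : ℕ} {c : Fin 2} (h : (s(u, v), c) ∈ D) :
    1 ≤ ew D {u, v} := by
  unfold ew
  rw [Nat.succ_le_iff, Finset.card_pos]
  exact ⟨_, Finset.mem_filter.2 ⟨h, by simp⟩⟩

lemma col_surj (c x : Fin 2) : x = col c true ∨ x = col c false := by
  revert c x; decide

lemma QT.step {c : Fin 2} {E : CL} {a b : Fin 7} (hab : a ≠ b)
    (hcnt : cnt E (fun i => i == a || i == b) = 0) (hbt : bdB ((a, b, true) :: E) = true)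
    (C : Finset ℕ) (D : Finset CE) (h : QT c E C D) :
    ∃ u ∈ C, ∃ v ∈ C, u ≠ v ∧
      (∀ c, (s(u, v), c) ∉ D) ∧ (∀ c S, 36 * ew (insert (s(u, v), c) D) S ≤ 61 * S.card) ∧
      ∀ x y, x = col c y → QT c ((a, b, y) :: E) C (insert (s(u, v), x) D) := by
  obtain ⟨f, hf, hC, hE, h1, h2⟩ := h
  have h1' : ∀ x y, ∀ S : Finset ℕ, ew (insert (s(f a, f b), x) D) S ≤
      (S \ Finset.univ.image f).card + cnt ((a, b, y) :: E) (fun i => decide (f i ∈ S)) := by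
    intro x y S
    have h3 := ew_insert D (f a) (f b) x S
    have h4 := h1 S
    unfold cnt at h4 ⊢
    rw [List.countP_cons]
    simp only [Bool.and_eq_true, decide_eq_true_eq] at h4 ⊢
    omega
  have h2' : ∀ x, ∀ S : Finset ℕ, S.Nonempty → (∀ i, f i ∉ S) →
      ew (insert (s(f a, f b), x) D) S + 1 ≤ S.card := by
    intro x S hS hK
    have h3 := ew_insert D (f a) (f b) x S
    have h4 := h2 S hS hK
    simp only [hK a, false_and, if_false] at h3
    omega
  refine ⟨f a, hC a, f b, hC b, fun h => hab (hf h), ?_, ?_, ?_⟩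
  · intro x hx
    have h3 := one_le_ew hx
    have h4 := h1 {f a, f b}
    have h5 : ({f a, f b} : Finset ℕ) \ Finset.univ.image f = ∅ := by
      rw [Finset.sdiff_eq_empty_iff_subset]
      intro z hz
      simp only [Finset.mem_insert, Finset.mem_singleton] at hz
      rcases hz with rfl | rfl <;> simp
    have h6 : (fun i => decide (f i ∈ ({f a, f b} : Finset ℕ))) = (fun i => i == a || i == b) := by
      funext i
      rw [Bool.eq_iff_iff]
      simp [hf.eq_iff]
    rw [h5, h6, hcnt] at h4
    simp at h4
    omega
  · intro x S
    rcases Finset.eq_empty_or_nonempty S with rfl | hS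
    · simp [ew_empty]
    · have := core_bound hbt hf (h1' x true) (h2' x) S hS
      omega
  · rintro x y rfl
    refine ⟨f, hf, hC, ?_, h1' _ _, h2' _⟩
    intro t ht
    rcases List.mem_cons.1 ht with rfl | ht
    · exact Finset.mem_insert_self _ _
    · exact Finset.mem_insert_of_mem (hE t ht)

lemma tree_sound (c : Fin 2) (t : Tr) : ∀ (E : CL), chk E t = true → ∀ {A X}, Ok A X →
    Av A X (QT c E) → ∃ A' X', Le A X A' X' ∧ Ok A' X' ∧ ∃ x, Av A' X' (TT x) := by
  induction t with
  | leaf a b d y =>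
    intro E hE A X ho h
    refine ⟨A, X, Le.refl _ _, ho, col c y, h.mono ?_⟩
    rintro C D - ⟨f, hf, hC, hED, h1, h2⟩
    simp only [chk, Bool.and_eq_true, bne_iff_ne] at hE
    obtain ⟨⟨⟨⟨⟨⟨n1, n2⟩, n3⟩, e1⟩, e2⟩, e3⟩, hb⟩ := hE
    exact ⟨f a, f b, f d, ⟨fun h => n1 (hf h), fun h => n2 (hf h), fun h => n3 (hf h),
      hasE_spec e1 hED, hasE_spec e2 hED, hasE_spec e3 hED⟩, core_bound hb hf h1 h2⟩
  | node a b t1 t2 ih1 ih2 =>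
    intro E hE A X ho h
    simp only [chk, Bool.and_eq_true, bne_iff_ne, beq_iff_eq] at hE
    obtain ⟨⟨⟨⟨⟨n1, hcnt⟩, hb1⟩, hb2⟩, hc1⟩, hc2⟩ := hE
    obtain ⟨A1, X1, hl1, ho1, x, hx⟩ := Av.edge (T' := fun x C D =>
        ∀ y, x = col c y → QT c ((a, b, y) :: E) C D) ho h (by
      intro C D _ hT
      obtain ⟨u, hu, v, hv, h1, h2, h3, h4⟩ := QT.step n1 hcnt hb1 C D hT
      exact ⟨u, hu, v, hv, h1, h2, h3, h4⟩)
    rcases col_surj c x with hy | hy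
    · obtain ⟨A2, X2, hl2, r⟩ := ih1 _ hc1 ho1 (hx.mono fun C D _ h => h true hy)
      exact ⟨A2, X2, hl1.trans hl2, r⟩
    · obtain ⟨A2, X2, hl2, r⟩ := ih2 _ hc2 ho1 (hx.mono fun C D _ h => h false hy)
      exact ⟨A2, X2, hl1.trans hl2, r⟩

def pathE : CL := [(0, 1, true), (1, 2, true), (2, 3, true), (3, 4, true), (4, 5, true),
  (5, 6, true)]

/-- Builder's strategy for a monochromatic triangle starting from a monochromatic path. -/
def strat : Tr :=
  .node 0 5
    (.node 0 2 (.leaf 0 1 2 true) (.node 0 4 (.leaf 0 4 5 true)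
      (.node 2 4 (.leaf 2 3 4 true) (.leaf 0 2 4 false))))
    (.node 2 6
      (.node 0 2 (.leaf 0 1 2 true) (.node 2 5 (.leaf 2 5 6 true) (.leaf 0 2 5 false)))
      (.node 2 4 (.leaf 2 3 4 true) (.node 4 6 (.leaf 4 5 6 true) (.leaf 2 4 6 false))))

lemma strat_chk : chk pathE strat = true := by decide +kernel

lemma QT.of_path {c : Fin 2} {C : Finset ℕ} {D : Finset CE} (h : PT c 7 C D) :
    QT c pathE C D := by
  obtain ⟨l, hl, hn, hC, hch, hfor⟩ := h
  obtain ⟨f, hf, hfC, hfE⟩ : ∃ f : Fin 7 → ℕ, Function.Injective f ∧ (∀ i, f i ∈ C) ∧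
      ∀ i : Fin 6, (s(f i.castSucc, f i.succ), c) ∈ D := by
    refine ⟨fun i => l[i.val]'(by omega), ?_, ?_, ?_⟩
    · intro i j hij
      exact Fin.ext ((hn.getElem_inj_iff).1 hij)
    · intro i
      exact hC _ (List.getElem_mem _)
    · intro i
      exact List.isChain_iff_getElem.1 hch i.val (by omega)
  set K := Finset.univ.image f with hK
  have hKc : K.card = 7 := by
    rw [hK, Finset.card_image_of_injective _ hf]; simp
  set g : Fin 6 → CE := fun i => (s(f i.castSucc, f i.succ), c) with hg
  have hginj : Function.Injective g := by
    intro i j hij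
    simp only [hg, Prod.mk.injEq, and_true, Sym2.eq_iff] at hij
    rcases hij with ⟨h1, _⟩ | ⟨h1, h2⟩
    · exact Fin.castSucc_injective _ (hf h1)
    · have h1 := congrArg Fin.val (hf h1)
      have h2 := congrArg Fin.val (hf h2)
      simp at h1 h2
      omega
  set DK := D.filter (fun x => ∀ v ∈ x.1, v ∈ K) with hDK
  have hDKc : DK.card + 1 ≤ 7 := by
    have := hfor K (Finset.card_pos.1 (by omega))
    rwa [hKc] at this
  have hsub : Finset.univ.image g ⊆ DK := by
    intro x hx
    obtain ⟨i, -, rfl⟩ := Finset.mem_image.1 hx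
    rw [hDK, Finset.mem_filter]
    refine ⟨hfE i, ?_⟩
    intro v hv
    simp only [hg, Sym2.mem_iff] at hv
    rcases hv with rfl | rfl <;> simp [hK]
  have hgc : (Finset.univ.image g).card = 6 := by
    rw [Finset.card_image_of_injective _ hginj]; simp
  have heq : Finset.univ.image g = DK := Finset.eq_of_subset_of_card_le hsub (by omega)
  refine ⟨f, hf, hfC, ?_, ?_, fun S hS _ => hfor S hS⟩
  · intro t ht
    simp only [pathE, List.mem_cons, List.not_mem_nil, or_false] at ht
    rcases ht with rfl | rfl | rfl | rfl | rfl | rfl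
    · exact hfE 0
    · exact hfE 1
    · exact hfE 2
    · exact hfE 3
    · exact hfE 4
    · exact hfE 5
  · intro S
    have e1 : ew D S = ((D.filter (fun x => ∀ v ∈ x.1, v ∈ S)).filter
          (fun x => ∀ v ∈ x.1, v ∈ K)).card + ((D.filter (fun x => ∀ v ∈ x.1, v ∈ S)).filter
          (fun x => ¬ ∀ v ∈ x.1, v ∈ K)).card :=
      (Finset.card_filter_add_card_filter_not _).symm
    have e2 : ((D.filter (fun x => ∀ v ∈ x.1, v ∈ S)).filter
          (fun x => ∀ v ∈ x.1, v ∈ K)).card ≤ cnt pathE (fun i => decide (f i ∈ S)) := by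
      have s1 : (D.filter (fun x => ∀ v ∈ x.1, v ∈ S)).filter (fun x => ∀ v ∈ x.1, v ∈ K) ⊆
          (Finset.univ.filter (fun i : Fin 6 => f i.castSucc ∈ S ∧ f i.succ ∈ S)).image g := by
        intro x hx
        rw [Finset.mem_filter, Finset.mem_filter] at hx
        have : x ∈ DK := Finset.mem_filter.2 ⟨hx.1.1, hx.2⟩
        rw [← heq] at this
        obtain ⟨i, -, rfl⟩ := Finset.mem_image.1 this
        refine Finset.mem_image_of_mem _ (Finset.mem_filter.2 ⟨Finset.mem_univ _, ?_, ?_⟩)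
        · exact hx.1.2 _ (by simp [hg])
        · exact hx.1.2 _ (by simp [hg])
      refine (Finset.card_le_card s1).trans (Finset.card_image_le.trans (le_of_eq ?_))
      rw [Finset.card_filter]
      simp only [cnt, pathE, List.countP_cons, List.countP_nil, Fin.sum_univ_succ,
        Bool.and_eq_true, decide_eq_true_eq]
      simp
      ring_nf
    have e3 : ((D.filter (fun x => ∀ v ∈ x.1, v ∈ S)).filter
          (fun x => ¬ ∀ v ∈ x.1, v ∈ K)).card + DK.card ≤ ew D (S ∪ K) := by
      unfold ew
      rw [← Finset.card_union_of_disjoint]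
      · apply Finset.card_le_card
        intro x hx
        rcases Finset.mem_union.1 hx with hx | hx
        · rw [Finset.mem_filter, Finset.mem_filter] at hx
          exact Finset.mem_filter.2 ⟨hx.1.1, fun v hv => Finset.mem_union_left _ (hx.1.2 v hv)⟩
        · rw [hDK, Finset.mem_filter] at hx
          exact Finset.mem_filter.2 ⟨hx.1, fun v hv => Finset.mem_union_right _ (hx.2 v hv)⟩
      · rw [Finset.disjoint_left]
        intro x hx hx'
        exact (Finset.mem_filter.1 hx).2 (Finset.mem_filter.1 hx').2
    have e4 := hfor (S ∪ K) (Finset.card_pos.1 (by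
      have := Finset.card_le_card (Finset.subset_union_right : K ⊆ S ∪ K); omega))
    have e5 : (S ∪ K).card = (S \ K).card + K.card := by
      rw [← Finset.sdiff_union_self_eq_union, Finset.card_union_of_disjoint Finset.sdiff_disjoint]
    have e6 : DK.card = 6 := by rw [← heq, hgc]
    rw [← hK]
    omega

lemma tri_avail {A X} (ho : Ok A X) : ∃ A' X', Le A X A' X' ∧ Ok A' X' ∧
    ∃ x, Av A' X' (TT x) := by
  obtain ⟨A1, X1, hl1, ho1, c, h1⟩ := path_seven ho
  obtain ⟨A2, X2, hl2, r⟩ := tree_sound c strat pathE strat_chk ho1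
    (h1.mono fun C D _ h => QT.of_path h)
  exact ⟨A2, X2, hl1.trans hl2, r⟩

lemma TriAt.mono {x D D' r a b} (h : TriAt x D r a b) (hD : D ⊆ D') : TriAt x D' r a b :=
  ⟨h.1, h.2.1, h.2.2.1, hD h.2.2.2.1, hD h.2.2.2.2.1, hD h.2.2.2.2.2⟩

lemma TriAt.sub {x D r a b} {C : Finset ℕ} (h : TriAt x D r a b)
    (hD : ∀ x ∈ D, ∀ v ∈ x.1, v ∈ C) : ({r, a, b} : Finset ℕ) ⊆ C := by
  obtain ⟨-, -, -, h1, h2, h3⟩ := h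
  intro v hv
  simp only [Finset.mem_insert, Finset.mem_singleton] at hv
  rcases hv with rfl | rfl | rfl
  · exact hD _ h1 _ (by simp)
  · exact hD _ h1 _ (by simp)
  · exact hD _ h2 _ (by simp)

lemma bow_of_tri {x D r a b r' a' b'} (h : TriAt x D r a b) (h' : TriAt x D r' a' b')
    (hd : Disjoint ({r, a, b} : Finset ℕ) {r', a', b'}) (he : (s(r, r'), x) ∈ D) : Bow D := by
  obtain ⟨n1, n2, n3, h1, h2, h3⟩ := h
  obtain ⟨m1, m2, m3, k1, k2, k3⟩ := h'
  refine ⟨x, ![r, a, b, r', a', b'], ?_, h1, h2, h3, k1, k2, k3, he⟩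
  have hn : [r, a, b, r', a', b'].Nodup := by
    simp only [Finset.disjoint_insert_left, Finset.disjoint_singleton_left, Finset.mem_insert,
      Finset.mem_singleton] at hd
    simp only [List.nodup_cons, List.mem_cons, List.not_mem_nil]
    tauto
  intro i j hij
  have := List.nodup_iff_injective_get.1 hn
  apply this (a₁ := i) (a₂ := j)
  fin_cases i <;> fin_cases j <;> simpa using hij

lemma other {c x : Fin 2} (h : c ≠ x) : c = x + 1 := by
  revert c x; decide

/-- Two triangles joined by an edge of the other color. -/
def BT (x : Fin 2) : Ty := fun _ D => ∃ r1 a1 b1 r2 a2 b2, TriAt x D r1 a1 b1 ∧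
  TriAt x D r2 a2 b2 ∧ Disjoint ({r1, a1, b1} : Finset ℕ) {r2, a2, b2} ∧
  (s(r1, r2), x + 1) ∈ D ∧
  (∀ S : Finset ℕ, S.Nonempty → 36 * ew D S + 42 ≤ 61 * S.card) ∧
  (∀ S : Finset ℕ, r1 ∈ S → r2 ∈ S → 36 * ew D S + 48 ≤ 61 * S.card)

lemma sub_l (e : CE) (D1 D2 : Finset CE) : D1 ⊆ insert e (D1 ∪ D2) :=
  Finset.subset_union_left.trans (Finset.subset_insert _ _)

lemma sub_r (e : CE) (D1 D2 : Finset CE) : D2 ⊆ insert e (D1 ∪ D2) :=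
  Finset.subset_union_right.trans (Finset.subset_insert _ _)

/-- Resolve an edge where the color `x` yields a bowtie. -/
lemma Av.edge_or {A X} {T T' : Ty} (x : Fin 2) (ho : Ok A X) (h : Av A X T)
    (hT : ∀ C D, (∀ x ∈ D, ∀ v ∈ x.1, v ∈ C) → T C D → ∃ u ∈ C, ∃ v ∈ C, u ≠ v ∧
      (∀ c, (s(u, v), c) ∉ D) ∧ (∀ c S, S.Nonempty → 36 * ew (insert (s(u, v), c) D) S ≤ 61 * S.card) ∧
      Bow (insert (s(u, v), x) D) ∧ T' C (insert (s(u, v), x + 1) D)) :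
    ∃ A' X', Le A X A' X' ∧ Ok A' X' ∧ Av A' X' T' := by
  obtain ⟨A1, X1, hl1, ho1, c, hc⟩ := Av.edge (T' := fun c C D =>
      (c = x → Bow D) ∧ (c = x + 1 → T' C D)) ho h (by
    intro C D hDC hTC
    obtain ⟨u, hu, v, hv, h1, h2, h3, h4, h5⟩ := hT C D hDC hTC
    refine ⟨u, hu, v, hv, h1, h2, ?_, ?_⟩
    · intro c S
      rcases Finset.eq_empty_or_nonempty S with rfl | hS
      · simp [ew_empty]
      · exact h3 c S hS
    · intro c
      constructor
      · rintro rfl; exact h4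
      · rintro rfl; exact h5)
  by_cases hcx : c = x
  · exact absurd (hc.mono (T' := fun _ D => Bow D) fun C D _ h => h.1 hcx)
      (fun h => Av.not_bow ho1 h)
  · exact ⟨A1, X1, hl1, ho1, hc.mono fun C D _ h => h.2 (other hcx)⟩

lemma step_BT {A X x} (ho : Ok A X) (h : Av A X (TT x)) :
    ∃ A' X', Le A X A' X' ∧ Ok A' X' ∧ Av A' X' (BT x) := by
  refine Av.edge_or x ho (h.pair h) ?_
  rintro C D - ⟨C1, C2, D1, D2, rfl, rfl, hC, hD1, hD2, ⟨r1, a1, b1, t1, w1⟩, ⟨r2, a2, b2, t2, w2⟩⟩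
  have s1 := t1.sub hD1
  have s2 := t2.sub hD2
  have hr1 : r1 ∈ C1 := s1 (by simp)
  have hr2 : r2 ∈ C2 := s2 (by simp)
  have hd : Disjoint ({r1, a1, b1} : Finset ℕ) {r2, a2, b2} := (hC.mono_left s1).mono_right s2
  have hw : ∀ (c : Fin 2) (S : Finset ℕ), S.Nonempty →
      36 * ew (insert (s(r1, r2), c) (D1 ∪ D2)) S + 42 ≤ 61 * S.card ∧
      (r1 ∈ S → r2 ∈ S → 36 * ew (insert (s(r1, r2), c) (D1 ∪ D2)) S + 48 ≤ 61 * S.card) := by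
    intro c S hS
    obtain ⟨hc, ⟨hP, hQ, h⟩ | ⟨hP, hn, hQ, h⟩ | ⟨hP, hn, hQ, h⟩⟩ :=
      join_cases hC hD1 hD2 hr1 hr2 c S hS
    · have := w1 _ hP
      have := w2 _ hQ
      constructor
      · split_ifs at h <;> omega
      · intro _ _
        split_ifs at h <;> omega
    · have := w2 _ hQ
      exact ⟨by omega, fun h => absurd h hn⟩
    · have := w1 _ hQ
      exact ⟨by omega, fun _ h => absurd h hn⟩
  refine ⟨r1, Finset.mem_union_left _ hr1, r2, Finset.mem_union_right _ hr2, ?_,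
    cross_new hC hD1 hD2 hr1 hr2, ?_, ?_, ?_⟩
  · rintro rfl
    exact Finset.disjoint_left.1 hC hr1 hr2
  · intro c S hS
    have := (hw c S hS).1
    omega
  · exact bow_of_tri (t1.mono (sub_l _ _ _)) (t2.mono (sub_r _ _ _)) hd
      (Finset.mem_insert_self _ _)
  · exact ⟨r1, a1, b1, r2, a2, b2, t1.mono (sub_l _ _ _), t2.mono (sub_r _ _ _), hd,
      Finset.mem_insert_self _ _, fun S hS => (hw _ S hS).1,
      fun S h1 h2 => (hw _ S ⟨_, h1⟩).2 h1 h2⟩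

/-- Three triangles joined by a path of the other color. -/
def CT (x : Fin 2) : Ty := fun _ D => ∃ r1 a1 b1 r2 a2 b2 r3 a3 b3, TriAt x D r1 a1 b1 ∧
  TriAt x D r2 a2 b2 ∧ TriAt x D r3 a3 b3 ∧ Disjoint ({r2, a2, b2} : Finset ℕ) {r3, a3, b3} ∧
  r1 ≠ r2 ∧ r1 ≠ r3 ∧ (s(r1, r2), x + 1) ∈ D ∧ (s(r1, r3), x + 1) ∈ D ∧
  (∀ c, (s(r2, r3), c) ∉ D) ∧
  (∀ S : Finset ℕ, S.Nonempty → 36 * ew D S + 42 ≤ 61 * S.card) ∧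
  (∀ S : Finset ℕ, r2 ∈ S → r3 ∈ S → 36 * ew D S + 54 ≤ 61 * S.card)

lemma step_CT {A X x} (ho : Ok A X) (h0 : Av A X (BT x)) (h : Av A X (TT x)) :
    ∃ A' X', Le A X A' X' ∧ Ok A' X' ∧ Av A' X' (CT x) := by
  refine Av.edge_or x ho (h0.pair h) ?_
  rintro C D - ⟨C1, C2, D1, D2, rfl, rfl, hC, hD1, hD2,
    ⟨r1, a1, b1, r2, a2, b2, t1, t2, hd12, he12, w1, w1'⟩, ⟨r3, a3, b3, t3, w2⟩⟩
  have s1 := t1.sub hD1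
  have s2 := t2.sub hD1
  have s3 := t3.sub hD2
  have hr1 : r1 ∈ C1 := s1 (by simp)
  have hr2 : r2 ∈ C1 := s2 (by simp)
  have hr3 : r3 ∈ C2 := s3 (by simp)
  have hd13 : Disjoint ({r1, a1, b1} : Finset ℕ) {r3, a3, b3} := (hC.mono_left s1).mono_right s3
  have hd23 : Disjoint ({r2, a2, b2} : Finset ℕ) {r3, a3, b3} := (hC.mono_left s2).mono_right s3
  have n12 : r1 ≠ r2 := by
    rintro rfl
    exact (Finset.disjoint_left.1 hd12) (Finset.mem_insert_self _ _) (Finset.mem_insert_self _ _)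
  have n13 : r1 ≠ r3 := by
    rintro rfl
    exact Finset.disjoint_left.1 hC hr1 hr3
  have hw : ∀ (c : Fin 2) (S : Finset ℕ), S.Nonempty →
      36 * ew (insert (s(r1, r3), c) (D1 ∪ D2)) S + 42 ≤ 61 * S.card ∧
      (r2 ∈ S → r3 ∈ S → 36 * ew (insert (s(r1, r3), c) (D1 ∪ D2)) S + 54 ≤ 61 * S.card) := by
    intro c S hS
    obtain ⟨hc, ⟨hP, hQ, h⟩ | ⟨hP, hn, hQ, h⟩ | ⟨hP, hn, hQ, h⟩⟩ :=
      join_cases hC hD1 hD2 hr1 hr3 c S hS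
    · have k1 := w1 _ hP
      have k2 := w2 _ hQ
      constructor
      · split_ifs at h <;> omega
      · intro h2 h3
        split_ifs at h with hif
        · have := w1' (S ∩ C1) (Finset.mem_inter.2 ⟨hif.1, hr1⟩) (Finset.mem_inter.2 ⟨h2, hr2⟩)
          omega
        · omega
    · have := w2 _ hQ
      refine ⟨by omega, fun h2 => ?_⟩
      have : r2 ∈ S ∩ C1 := Finset.mem_inter.2 ⟨h2, hr2⟩
      rw [Finset.card_eq_zero.1 hP] at this
      simp at this
    · have := w1 _ hQ
      exact ⟨by omega, fun _ h => absurd h hn⟩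
  refine ⟨r1, Finset.mem_union_left _ hr1, r3, Finset.mem_union_right _ hr3, n13,
    cross_new hC hD1 hD2 hr1 hr3, ?_, ?_, ?_⟩
  · intro c S hS
    have := (hw c S hS).1
    omega
  · exact bow_of_tri (t1.mono (sub_l _ _ _)) (t3.mono (sub_r _ _ _)) hd13
      (Finset.mem_insert_self _ _)
  · refine ⟨r1, a1, b1, r2, a2, b2, r3, a3, b3, t1.mono (sub_l _ _ _), t2.mono (sub_l _ _ _),
      t3.mono (sub_r _ _ _), hd23, n12, n13, sub_l _ _ _ he12, Finset.mem_insert_self _ _, ?_,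
      fun S hS => (hw _ S hS).1, fun S h1 h2 => (hw _ S ⟨_, h1⟩).2 h1 h2⟩
    intro c hc
    rcases Finset.mem_insert.1 hc with hc | hc
    · simp only [Prod.mk.injEq, Sym2.eq_iff] at hc
      rcases hc.1 with ⟨h, -⟩ | ⟨-, h⟩
      · exact n12 h.symm
      · exact n13 h.symm
    · exact cross_new hC hD1 hD2 hr2 hr3 c hc

/-- A triangle in the other color with a pendant triangle at a vertex. -/
def GT (x : Fin 2) : Ty := fun _ D => ∃ r p q a b, TriAt (x + 1) D r p q ∧ TriAt x D r a b ∧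
  (∀ S : Finset ℕ, S.Nonempty → 36 * ew D S + 18 ≤ 61 * S.card)

lemma step_GT {A X x} (ho : Ok A X) (h : Av A X (CT x)) :
    ∃ A' X', Le A X A' X' ∧ Ok A' X' ∧ Av A' X' (GT x) := by
  refine Av.edge_or x ho h ?_
  rintro C D hD ⟨r1, a1, b1, r2, a2, b2, r3, a3, b3, t1, t2, t3, hd, n12, n13, e12, e13, hnew,
    w, w'⟩
  have n23 : r2 ≠ r3 := by
    rintro rfl
    exact (Finset.disjoint_left.1 hd) (Finset.mem_insert_self _ _) (Finset.mem_insert_self _ _)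
  have hsub : ∀ e : CE, D ⊆ insert e D := fun e => Finset.subset_insert _ _
  have hw : ∀ (c : Fin 2) (S : Finset ℕ), S.Nonempty →
      36 * ew (insert (s(r2, r3), c) D) S + 18 ≤ 61 * S.card := by
    intro c S hS
    have h1 := ew_insert D r2 r3 c S
    have h2 := w S hS
    split_ifs at h1 with hif
    · have := w' S hif.1 hif.2
      omega
    · omega
  refine ⟨r2, t2.sub hD (by simp), r3, t3.sub hD (by simp), n23, hnew, ?_, ?_, ?_⟩
  · intro c S hS
    have := hw c S hS
    omega
  · exact bow_of_tri (t2.mono (hsub _)) (t3.mono (hsub _)) hd (Finset.mem_insert_self _ _)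
  · exact ⟨r1, r2, r3, a1, b1, ⟨n12, n13, n23, hsub _ e12, hsub _ e13,
      Finset.mem_insert_self _ _⟩, t1.mono (hsub _), hw _⟩

lemma step_final {A X x} (ho : Ok A X) (h : Av A X (GT x)) : False := by
  obtain ⟨A1, X1, -, ho1, h1⟩ := Av.edge_or (T' := fun _ D => Bow D) x ho (h.pair h) (by
    rintro C D - ⟨C1, C2, D1, D2, rfl, rfl, hC, hD1, hD2, ⟨r1, p1, q1, a1, b1, t1, t1', w1⟩,
      ⟨r2, p2, q2, a2, b2, t2, t2', w2⟩⟩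
    have s1 := t1.sub hD1
    have s2 := t2.sub hD2
    have s1' := t1'.sub hD1
    have s2' := t2'.sub hD2
    have hr1 : r1 ∈ C1 := s1 (by simp)
    have hr2 : r2 ∈ C2 := s2 (by simp)
    refine ⟨r1, Finset.mem_union_left _ hr1, r2, Finset.mem_union_right _ hr2, ?_,
      cross_new hC hD1 hD2 hr1 hr2, ?_, ?_, ?_⟩
    · rintro rfl
      exact Finset.disjoint_left.1 hC hr1 hr2
    · intro c S hS
      obtain ⟨hc, ⟨hP, hQ, h⟩ | ⟨hP, hn, hQ, h⟩ | ⟨hP, hn, hQ, h⟩⟩ :=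
        join_cases hC hD1 hD2 hr1 hr2 c S hS
      · have := w1 _ hP
        have := w2 _ hQ
        split_ifs at h <;> omega
      · have := w2 _ hQ
        omega
      · have := w1 _ hQ
        omega
    · exact bow_of_tri (t1'.mono (sub_l _ _ _)) (t2'.mono (sub_r _ _ _))
        ((hC.mono_left s1').mono_right s2') (Finset.mem_insert_self _ _)
    · exact bow_of_tri (t1.mono (sub_l _ _ _)) (t2.mono (sub_r _ _ _))
        ((hC.mono_left s1).mono_right s2) (Finset.mem_insert_self _ _))
  exact Av.not_bow ho1 h1

lemma win_empty : Win ∅ := by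
  by_contra hw
  have ho : Ok ∅ ∅ := ⟨hw, by simp [ew], by simp⟩
  obtain ⟨A1, X1, -, ho1, x, h1⟩ := tri_avail ho
  obtain ⟨A2, X2, hl2, ho2, h2⟩ := step_BT ho1 h1
  obtain ⟨A3, X3, -, ho3, h3⟩ := step_CT ho2 h2 (h1.le hl2)
  obtain ⟨A4, X4, -, ho4, h4⟩ := step_GT ho3 h3
  exact step_final ho4 h4

/-- deterministic part of the bowtie upper bound. Builder has a winning
strategy in the deterministic bowtie-avoidance game with 2 colors and density restriction
`d = 61/36`. -/
theorem statement11 : BuilderWinsDensity bowtie 2 ((61 : ℝ) / 36) := by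
  exact builder_of_win win_empty
end
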